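/- arXiv:2005.04450 — 2 statements merged into one kernel-verified Lean document; each statement's English description precedes it below -/
import Mathlib

section
/- Let $-1<\alpha,\beta<\infty$ and let $\mu$ be a finite positive Borel measure on the unit disk such that the Toeplitz operator $T_{\mu,\beta}:L^1_a(\omega_\alpha)\to L^1_a(\omega_\beta)$ is compact. Then $\mu$ is a vanishing Carleson measure for $L^1_a(\omega_\alpha)$: for each $r\in(0,1)$, $\lim_{|z|\to 1^-}\mu(D(z,r))/(1-|z|^2)^{\alpha+2}=0$. -/
/-!
The proof tests compactness on normalized kernel functions. For a natural number `k` so large that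
`s = 2 + b + k ≥ 4 + 2a`, put
`f_z(w) = (1 - |z|²)^{s-2-a} w^k (1 - z̄w)^{-s}`. A Möbius change of variables
(`lintegral_mob`, `lintegral_kernel_le`) shows that these are bounded in `L¹(ω_a)` uniformly in `z`
(`wnorm_testF_le`).

Differentiating the Toeplitz integral `k` times raises the exponent of the kernel from `2 + b` to
`s` and produces a factor `w̄^k`, so that at the point `z` itself the integrand of
`(T f_z)^{(k)}(z)` is a positive multiple of `|w|^{2k} |1 - z̄w|^{-2s}`. On the pseudohyperbolic
disk `D(z, r)` the quantity `|1 - z̄w|` is at most a multiple of `1 - |z|²`, hence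
`|(T f_z)^{(k)}(z)| (1 - |z|²)^s` dominates `μ(D(z, r)) / (1 - |z|²)^{a+2}`
(`iteratedDeriv_toep_ge`, `iteratedDeriv_toep_lower`).

In the other direction, Cauchy's estimate and the area mean value inequality bound
`|F^{(k)}(z)| (1 - |z|)^s` by the `L¹(ω_b)` mass of `F` on the disk of centre `z` and radius
`(1 - |z|) / 2` (`iteratedDeriv_estimate`). If `|z_n| → 1` and `T f_{z_n}` converges to `G` in
`L¹(ω_b)` along a subsequence, this mass is at most `‖T f_{z_n} - G‖` plus the mass of `G` on a
shrinking disk, and both tend to zero (`tendsto_lintegral_ball`). The limit `G` is never identified: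
absolute continuity of its integral is enough. So `μ(D(z_n, r)) / (1 - |z_n|²)^{a+2}` cannot stay
bounded away from zero.
-/

open MeasureTheory Metric Filter Complex Set
open scoped ENNReal NNReal Topology

/-- The normalized area measure on `ℂ`. -/
noncomputable def dA : Measure ℂ := (ENNReal.ofReal Real.pi)⁻¹ • volume

/-- The standard weight `ω_a(z) = (1+a)(1-|z|²)^a`. -/
noncomputable def stdW (a : ℝ) (z : ℂ) : ℝ := (1 + a) * (1 - ‖z‖ ^ 2) ^ a

/-- The weighted `L^p` (quasi-)norm over the unit disk. -/
noncomputable def wnorm (p a : ℝ) (f : ℂ → ℂ) : ℝ≥0∞ :=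
  (∫⁻ z in ball (0 : ℂ) 1, ENNReal.ofReal (‖f z‖ ^ p * stdW a z) ∂dA) ^ (1 / p)

/-- The pseudohyperbolic disk `D(z,r)`. -/
def pD (z : ℂ) (r : ℝ) : Set ℂ :=
  {w | w ∈ ball (0 : ℂ) 1 ∧ ‖(z - w) / (1 - (starRingEnd ℂ) z * w)‖ < r}

/-- The Toeplitz operator `T_{μ,b}`. -/
noncomputable def Toep (μ : Measure ℂ) (b : ℝ) (f : ℂ → ℂ) (z : ℂ) : ℂ :=
  ∫ w in ball (0 : ℂ) 1, f w / (1 - z * (starRingEnd ℂ) w) ^ (((2 + b : ℝ)) : ℂ) ∂μ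

/-- The Bloch norm. -/
noncomputable def blochNorm (g : ℂ → ℂ) : ℝ :=
  ‖g 0‖ + sSup ((fun z => (1 - ‖z‖ ^ 2) * ‖deriv g z‖) '' ball (0 : ℂ) 1)

/-- Membership in the Bloch space. -/
def MemBloch (g : ℂ → ℂ) : Prop :=
  DifferentiableOn ℂ g (ball (0 : ℂ) 1) ∧
    BddAbove ((fun z => (1 - ‖z‖ ^ 2) * ‖deriv g z‖) '' ball (0 : ℂ) 1)

namespace BergmanToeplitz

/-! ### The area mean value inequality and pointwise bounds for derivatives -/

/-- The sub-mean value property of `|F|` on a circle, in the polar parametrization. -/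
lemma enorm_le_circle {F : ℂ → ℂ} {z : ℂ} {r : ℝ} (hr : 0 < r)
    (hF : DiffContOnCl ℂ F (ball z r)) :
    ‖F z‖ₑ * ENNReal.ofReal (2 * Real.pi) ≤
      ∫⁻ θ in Ioo (-Real.pi) Real.pi, ‖F (z + Complex.polarCoord.symm (r, θ))‖ₑ := by
  have h1 := DiffContOnCl.circleAverage (f := F) (c := z) (R := r) (by rwa [abs_of_pos hr])
  rw [Real.circleAverage_eq_integral_add (-Real.pi),
    intervalIntegral.integral_comp_add_right (fun θ => F (circleMap z r θ)), zero_add,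
    show 2 * Real.pi + -Real.pi = Real.pi by ring,
    intervalIntegral.integral_of_le (by linarith [Real.pi_pos]),
    integral_Ioc_eq_integral_Ioo] at h1
  have h2 : (∫ θ in Ioo (-Real.pi) Real.pi, F (circleMap z r θ)) = ((2 * Real.pi : ℝ) : ℂ) * F z := by
    rw [← h1, Complex.real_smul, ← mul_assoc, ← Complex.ofReal_mul,
      mul_inv_cancel₀ (by positivity), Complex.ofReal_one, one_mul]
  have h3 := enorm_integral_le_lintegral_enorm (μ := volume.restrict (Ioo (-Real.pi) Real.pi))
    (fun θ => F (circleMap z r θ))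
  rw [h2, enorm_mul, mul_comm] at h3
  have h4 : ‖((2 * Real.pi : ℝ) : ℂ)‖ₑ = ENNReal.ofReal (2 * Real.pi) := by
    rw [← ofReal_norm, Complex.norm_real, Real.norm_of_nonneg (by positivity)]
  rw [h4] at h3
  refine h3.trans (le_of_eq (lintegral_congr fun θ => ?_))
  rw [Complex.polarCoord_symm_apply, circleMap, Complex.exp_mul_I]
  push_cast
  rfl

/-- Sub-mean value property of `|F|` over disks. -/
lemma enorm_mul_volume_le {F : ℂ → ℂ} {z : ℂ} {R : ℝ}
    (hF : DifferentiableOn ℂ F (ball z R)) :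
    ‖F z‖ₑ * volume (ball z R) ≤ ∫⁻ w in ball z R, ‖F w‖ₑ := by
  let T : Set (ℝ × ℝ) := Ioo 0 R ×ˢ Ioo (-Real.pi) Real.pi
  have polar : ∀ G : ℂ → ℝ≥0∞, ∫⁻ w in ball z R, G w =
      ∫⁻ p in T, ENNReal.ofReal p.1 * G (z + Complex.polarCoord.symm p) := by
    intro G
    rw [← lintegral_indicator measurableSet_ball, ← lintegral_add_left_eq_self _ z,
      ← Complex.lintegral_comp_polarCoord_symm, ← lintegral_indicator
        (polarCoord.open_target.measurableSet), ← lintegral_indicator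
        (measurableSet_Ioo.prod measurableSet_Ioo)]
    refine lintegral_congr fun p => ?_
    have hT : p ∈ T ↔ p ∈ polarCoord.target ∧ z + Complex.polarCoord.symm p ∈ ball z R := by
      rw [mem_ball_iff_norm, add_sub_cancel_left, Complex.norm_polarCoord_symm]
      simp only [T, polarCoord_target, mem_prod, mem_Ioo, mem_Ioi]
      constructor
      · rintro ⟨⟨h, h'⟩, h''⟩
        exact ⟨⟨h, h''⟩, by rwa [abs_of_pos h]⟩
      · rintro ⟨⟨h, h'⟩, h''⟩
        exact ⟨⟨h, by rwa [abs_of_pos h] at h''⟩, h'⟩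
    by_cases h1 : p ∈ polarCoord.target
    · by_cases h2 : z + Complex.polarCoord.symm p ∈ ball z R
      · rw [indicator_of_mem h1, indicator_of_mem h2, indicator_of_mem (hT.2 ⟨h1, h2⟩), smul_eq_mul]
      · rw [indicator_of_mem h1, indicator_of_notMem h2, indicator_of_notMem (fun h => h2 (hT.1 h).2),
          smul_zero]
    · rw [indicator_of_notMem h1, indicator_of_notMem (fun h => h1 (hT.1 h).1)]
  have hvol : ‖F z‖ₑ * volume (ball z R) = ∫⁻ r in Ioo 0 R, ENNReal.ofReal r *
      (‖F z‖ₑ * ENNReal.ofReal (2 * Real.pi)) := by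
    rw [← setLIntegral_const, polar, Measure.volume_eq_prod, setLIntegral_prod _ (by fun_prop)]
    refine lintegral_congr fun r => ?_
    change ∫⁻ _ in Ioo (-Real.pi) Real.pi, ENNReal.ofReal r * ‖F z‖ₑ = _
    rw [setLIntegral_const, Real.volume_Ioo]
    ring_nf
  have hmeas : AEMeasurable (fun p : ℝ × ℝ => ENNReal.ofReal p.1 *
      ‖F (z + Complex.polarCoord.symm p)‖ₑ) ((volume.prod volume).restrict T) := by
    have hc : ContinuousOn (fun p : ℝ × ℝ => F (z + Complex.polarCoord.symm p)) T := by
      refine hF.continuousOn.comp ?_ ?_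
      · simp only [Complex.polarCoord_symm_apply]
        fun_prop
      · rintro p ⟨⟨h, h'⟩, -⟩
        rw [mem_ball_iff_norm, add_sub_cancel_left, Complex.norm_polarCoord_symm, abs_of_pos h]
        exact h'
    have := (hc.aestronglyMeasurable (μ := volume.prod volume)
      (measurableSet_Ioo.prod measurableSet_Ioo)).enorm
    exact AEMeasurable.mul (by fun_prop) this
  rw [hvol, polar, Measure.volume_eq_prod, setLIntegral_prod _ hmeas]
  refine setLIntegral_mono' measurableSet_Ioo fun r hr => ?_
  rw [lintegral_const_mul' _ _ ENNReal.ofReal_ne_top]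
  gcongr
  refine enorm_le_circle hr.1 ⟨hF.mono (ball_subset_ball hr.2.le), ?_⟩
  rw [closure_ball _ hr.1.ne']
  exact hF.continuousOn.mono (closedBall_subset_ball hr.2)

/-! ### Finiteness of the weight and the Möbius change of variables -/

lemma lintegral_weight_lt_top {a : ℝ} (ha : -1 < a) :
    ∫⁻ u in ball (0 : ℂ) 1, ENNReal.ofReal ((1 - ‖u‖ ^ 2) ^ a) < ⊤ := by
  have h : IntegrableOn (fun u : ℂ => (1 - ‖u‖ ^ 2) ^ a) (ball (0 : ℂ) 1) := by
    rw [integrableOn_fun_norm_addHaar volume (f := fun r : ℝ => (1 - r ^ 2) ^ a),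
      ← integrableOn_Ioc_iff_integrableOn_Ioo]
    have h0 : a + 1 ≠ 0 := by linarith
    -- In polar coordinates the integrand is `r (1 - r²)^a`, which has an explicit primitive that
    -- is continuous up to `r = 1` because `a + 1 > 0`.
    refine intervalIntegral.integrableOn_deriv_of_nonneg
      (g := fun r : ℝ => - (1 - r ^ 2) ^ (a + 1) / (2 * (a + 1))) ?_ ?_ ?_
    · refine ((ContinuousOn.rpow_const (by fun_prop) fun x _ => Or.inr (by linarith)).neg).div_const _
    · intro x hx
      have hp : 0 < 1 - x ^ 2 := by nlinarith [hx.1, hx.2]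
      have := ((((hasDerivAt_id x).pow 2).const_sub 1).rpow_const (p := a + 1)
        (Or.inl hp.ne')).neg.div_const (2 * (a + 1))
      convert! this using 1
      simp
      field_simp
    · intro x hx
      have hp : 0 < 1 - x ^ 2 := by nlinarith [hx.1, hx.2]
      have := hx.1
      simp
      positivity
  refine (lintegral_mono fun u => ?_).trans_lt h.hasFiniteIntegral
  exact Real.ofReal_le_enorm _

/-- The disk automorphism exchanging `0` and `z`. -/
noncomputable def mob (z u : ℂ) : ℂ := (z - u) / (1 - (starRingEnd ℂ) z * u)

lemma one_sub_ne {z u : ℂ} (hz : ‖z‖ < 1) (hu : ‖u‖ < 1) : 1 - (starRingEnd ℂ) z * u ≠ 0 := by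
  intro h
  have : ‖(starRingEnd ℂ) z * u‖ = 1 := by rw [← sub_eq_zero.1 h]; simp
  rw [norm_mul, RCLike.norm_conj] at this
  nlinarith [norm_nonneg z, norm_nonneg u]

lemma mob_identity {z u : ℂ} (hz : ‖z‖ < 1) (hu : ‖u‖ < 1) :
    1 - ‖mob z u‖ ^ 2 = (1 - ‖z‖ ^ 2) * (1 - ‖u‖ ^ 2) / ‖1 - (starRingEnd ℂ) z * u‖ ^ 2 := by
  have h := one_sub_ne hz hu
  have h' : ‖1 - (starRingEnd ℂ) z * u‖ ^ 2 ≠ 0 := by simpa using h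
  rw [mob, norm_div, div_pow, eq_div_iff h', sub_mul, div_mul_cancel₀ _ h']
  simp only [← Complex.normSq_eq_norm_sq, Complex.normSq_apply]
  simp
  ring

lemma norm_mob_lt {z u : ℂ} (hz : ‖z‖ < 1) (hu : ‖u‖ < 1) : ‖mob z u‖ < 1 := by
  have h := mob_identity hz hu
  have h1 : 0 < 1 - ‖z‖ ^ 2 := by nlinarith [norm_nonneg z]
  have h2 : 0 < 1 - ‖u‖ ^ 2 := by nlinarith [norm_nonneg u]
  have h3 : 0 < ‖1 - (starRingEnd ℂ) z * u‖ := by simpa using one_sub_ne hz hu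
  have : 0 < 1 - ‖mob z u‖ ^ 2 := by rw [h]; positivity
  nlinarith [norm_nonneg (mob z u)]

lemma one_sub_mob {z u : ℂ} (hz : ‖z‖ < 1) (hu : ‖u‖ < 1) :
    1 - (starRingEnd ℂ) z * mob z u = ((1 - ‖z‖ ^ 2 : ℝ) : ℂ) / (1 - (starRingEnd ℂ) z * u) := by
  have h := one_sub_ne hz hu
  have hc : (starRingEnd ℂ) z * z = ((‖z‖ ^ 2 : ℝ) : ℂ) := by
    rw [Complex.conj_mul']; push_cast; rfl
  rw [mob, eq_div_iff h, sub_mul, mul_assoc, div_mul_cancel₀ _ h]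
  push_cast at hc ⊢
  rw [← hc]; ring

lemma mob_mob {z u : ℂ} (hz : ‖z‖ < 1) (hu : ‖u‖ < 1) : mob z (mob z u) = u := by
  have h := one_sub_ne hz hu
  have h2 := one_sub_ne hz (norm_mob_lt hz hu)
  rw [mob, div_eq_iff h2, one_sub_mob hz hu, mob]
  have hc : (starRingEnd ℂ) z * z = ((‖z‖ ^ 2 : ℝ) : ℂ) := by
    rw [Complex.conj_mul']; push_cast; rfl
  push_cast at hc ⊢
  rw [← hc, eq_comm, mul_div_assoc', div_eq_iff h, sub_mul, div_mul_cancel₀ _ h]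
  ring

lemma mob_image {z : ℂ} (hz : ‖z‖ < 1) : mob z '' ball 0 1 = ball 0 1 := by
  ext w
  simp only [mem_image, mem_ball_zero_iff]
  exact ⟨fun ⟨u, hu, h⟩ => h ▸ norm_mob_lt hz hu, fun hw => ⟨_, norm_mob_lt hz hw, mob_mob hz hw⟩⟩

lemma hasDerivAt_mob {z u : ℂ} (hz : ‖z‖ < 1) (hu : ‖u‖ < 1) :
    HasDerivAt (mob z) (-((1 - ‖z‖ ^ 2 : ℝ) : ℂ) / (1 - (starRingEnd ℂ) z * u) ^ 2) u := by
  have h := one_sub_ne hz hu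
  have := ((hasDerivAt_id u).const_sub z).div
    (((hasDerivAt_id u).const_mul ((starRingEnd ℂ) z)).const_sub 1) h
  convert! this using 1
  have hc : (starRingEnd ℂ) z * z = ((‖z‖ ^ 2 : ℝ) : ℂ) := by
    rw [Complex.conj_mul']; push_cast; rfl
  push_cast at hc ⊢
  rw [← hc]
  congr 1
  simp
  ring

/-- Change of variables by a disk automorphism. -/
lemma lintegral_mob {z : ℂ} (hz : ‖z‖ < 1) (g : ℂ → ℝ≥0∞) :
    ∫⁻ w in ball (0 : ℂ) 1, g w = ∫⁻ u in ball (0 : ℂ) 1,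
      ENNReal.ofReal ((1 - ‖z‖ ^ 2) ^ 2 / ‖1 - (starRingEnd ℂ) z * u‖ ^ 4) * g (mob z u) := by
  have main := lintegral_image_eq_lintegral_abs_det_fderiv_mul volume (measurableSet_ball
    (x := (0 : ℂ)) (ε := 1)) (f := mob z) (f' := fun u => (ContinuousLinearMap.toSpanSingleton ℂ
      (-((1 - ‖z‖ ^ 2 : ℝ) : ℂ) / (1 - (starRingEnd ℂ) z * u) ^ 2)).restrictScalars ℝ)
    (fun u hu => ((hasDerivAt_mob hz (mem_ball_zero_iff.1 hu)).hasFDerivAt.restrictScalars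
      ℝ).hasFDerivWithinAt)
    (fun u hu v hv h => by
      rw [← mob_mob hz (mem_ball_zero_iff.1 hu), h, mob_mob hz (mem_ball_zero_iff.1 hv)]) g
  rw [mob_image hz] at main
  rw [main]
  refine setLIntegral_congr_fun measurableSet_ball fun u hu => ?_
  have h1 : 0 < 1 - ‖z‖ ^ 2 := by nlinarith [norm_nonneg z]
  have h2 : ‖(1 : ℂ) - (‖z‖ : ℂ) ^ 2‖ = 1 - ‖z‖ ^ 2 := by
    rw [← Complex.ofReal_pow, ← Complex.ofReal_one, ← Complex.ofReal_sub, Complex.norm_real,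
      Real.norm_of_nonneg h1.le]
  congr 2
  simp [ContinuousLinearMap.det, LinearMap.det_restrictScalars,
      Algebra.norm_complex_eq, Complex.normSq_eq_norm_sq]
  rw [norm_sub_rev, h2, abs_of_nonneg (by positivity), ← pow_mul]

/-- Rudin–Forelli type estimate, with the explicit constant coming from the crude bound
`|1 - z̄u| ≤ 2`; it needs `s ≥ 4 + 2a` so that the exponent left after the
change of variables is nonnegative. -/
lemma lintegral_kernel_le {a s : ℝ} (hs : 4 + 2 * a ≤ s) {z : ℂ} (hz : ‖z‖ < 1) :
    ∫⁻ w in ball (0 : ℂ) 1,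
      ENNReal.ofReal ((1 - ‖z‖ ^ 2) ^ (s - 2 - a) * ‖1 - (starRingEnd ℂ) z * w‖ ^ (-s) *
        (1 - ‖w‖ ^ 2) ^ a) ≤
    ENNReal.ofReal (2 ^ (s - 4 - 2 * a)) *
      ∫⁻ u in ball (0 : ℂ) 1, ENNReal.ofReal ((1 - ‖u‖ ^ 2) ^ a) := by
  rw [lintegral_mob hz, ← lintegral_const_mul' _ _ ENNReal.ofReal_ne_top]
  refine setLIntegral_mono' measurableSet_ball fun u hu => ?_
  have hu := mem_ball_zero_iff.1 hu
  have h1 : 0 < 1 - ‖z‖ ^ 2 := by nlinarith [norm_nonneg z]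
  have h2 : 0 < 1 - ‖u‖ ^ 2 := by nlinarith [norm_nonneg u]
  have h3 : 0 < ‖1 - (starRingEnd ℂ) z * u‖ := by simpa using one_sub_ne hz hu
  have h4 : ‖1 - (starRingEnd ℂ) z * u‖ ≤ 2 := by
    refine (norm_sub_le _ _).trans ?_
    rw [norm_mul, RCLike.norm_conj, norm_one]
    nlinarith [norm_nonneg z, norm_nonneg u]
  rw [← ENNReal.ofReal_mul (by positivity), ← ENNReal.ofReal_mul (by positivity)]
  refine ENNReal.ofReal_le_ofReal ?_
  rw [mob_identity hz hu, one_sub_mob hz hu, norm_div, Complex.norm_real, Real.norm_of_nonneg h1.le]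
  set X := 1 - ‖z‖ ^ 2
  set Y := 1 - ‖u‖ ^ 2
  set N := ‖1 - (starRingEnd ℂ) z * u‖
  have key : X ^ 2 / N ^ 4 * (X ^ (s - 2 - a) * (X / N) ^ (-s) * (X * Y / N ^ 2) ^ a) =
      N ^ (s - 4 - 2 * a) * Y ^ a := by
    rw [Real.div_rpow (by positivity) (by positivity), Real.div_rpow (by positivity) (by positivity),
      Real.mul_rpow h1.le h2.le, ← Real.rpow_natCast N 2, ← Real.rpow_mul h3.le,
      ← Real.rpow_natCast N 4, ← Real.rpow_natCast X 2]
    have e1 : X ^ ((2 : ℕ) : ℝ) * X ^ (s - 2 - a) * X ^ (-s) * X ^ a = 1 := by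
      rw [← Real.rpow_add h1, ← Real.rpow_add h1, ← Real.rpow_add h1]
      convert Real.rpow_zero X using 2
      push_cast; ring
    have e2 : N ^ (s - 4 - 2 * a) * (N ^ ((4 : ℕ) : ℝ) * N ^ (-s) * N ^ (((2 : ℕ) : ℝ) * a)) = 1 := by
      rw [← Real.rpow_add h3, ← Real.rpow_add h3, ← Real.rpow_add h3]
      convert Real.rpow_zero N using 2
      push_cast; ring
    have p1 : 0 < N ^ ((4 : ℕ) : ℝ) := by positivity
    have p2 : 0 < N ^ (-s) := by positivity
    have p3 : 0 < N ^ (((2 : ℕ) : ℝ) * a) := by positivity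
    rw [eq_comm]
    generalize N ^ ((4 : ℕ) : ℝ) = n1 at *
    generalize N ^ (-s) = n2 at *
    generalize N ^ (((2 : ℕ) : ℝ) * a) = n3 at *
    generalize N ^ (s - 4 - 2 * a) = n4 at *
    have e3 : n4 = 1 / (n1 * n2 * n3) := eq_one_div_of_mul_eq_one_left e2
    calc _ = n4 * Y ^ a * 1 := by ring
      _ = _ := by
        rw [← e1, e3]
        field_simp
  rw [key]
  gcongr
  linarith

/-- The area mean value inequality combined with Cauchy's estimate: on the disk `B(z, R)` with
`R = (1 - |z|) / 2` the weight `ω_b` is comparable to `R ^ b`. -/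
lemma iteratedDeriv_estimate {b : ℝ} (hb : -1 < b) (k : ℕ) : ∃ C : ℝ, 0 < C ∧
    ∀ (F : ℂ → ℂ) (z : ℂ), DifferentiableOn ℂ F (ball 0 1) → ‖z‖ < 1 →
      ENNReal.ofReal (‖iteratedDeriv k F z‖ * ((1 - ‖z‖) / 2) ^ (2 + b + k)) ≤
        ENNReal.ofReal C * ∫⁻ w in ball z ((1 - ‖z‖) / 2),
          ENNReal.ofReal (‖F w‖ ^ (1 : ℝ) * stdW b w) ∂dA := by
  have hb' : 0 < 1 + b := by linarith
  refine ⟨k.factorial * 4 * 2 ^ k / Real.pi * (6 ^ |b| / (1 + b) * Real.pi), by positivity, ?_⟩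
  intro F z hF hz
  obtain ⟨R, hR⟩ : ∃ R, R = (1 - ‖z‖) / 2 := ⟨_, rfl⟩
  rw [← hR]
  have hR0 : 0 < R := by rw [hR]; linarith
  have hin : closedBall z R ⊆ ball 0 1 := by
    intro w hw
    rw [mem_closedBall_iff_norm] at hw
    rw [mem_ball_zero_iff]
    calc ‖w‖ = ‖(w - z) + z‖ := by ring_nf
      _ ≤ ‖w - z‖ + ‖z‖ := norm_add_le _ _
      _ < 1 := by linarith
  have hfin : ∫⁻ w in ball z R, ‖F w‖ₑ ≠ ⊤ := by
    have : IntegrableOn F (closedBall z R) :=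
      (hF.continuousOn.mono hin).integrableOn_compact (isCompact_closedBall _ _)
    exact (this.mono_set ball_subset_closedBall).hasFiniteIntegral.ne
  obtain ⟨I, hI⟩ : ∃ I : ℝ≥0, ∫⁻ w in ball z R, ‖F w‖ₑ = I := ⟨_, (ENNReal.coe_toNNReal hfin).symm⟩
  have hsph : ∀ ζ ∈ sphere z (R / 2), ‖F ζ‖ ≤ I * 4 / (Real.pi * R ^ 2) := by
    intro ζ hζ
    have hsub : ball ζ (R / 2) ⊆ ball z R := by
      refine ball_subset_ball' ?_
      rw [mem_sphere.1 hζ]; linarith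
    have h1 := (enorm_mul_volume_le (hF.mono (hsub.trans (ball_subset_closedBall.trans hin)))).trans
      (lintegral_mono_set hsub)
    rw [hI, Complex.volume_ball] at h1
    have h2 : ‖F ζ‖ * ((R / 2) ^ 2 * Real.pi) ≤ I := by
      have h3 := ENNReal.toReal_mono ENNReal.coe_ne_top h1
      rw [ENNReal.toReal_mul, ENNReal.toReal_mul, ENNReal.toReal_pow,
        ENNReal.toReal_ofReal (by positivity)] at h3
      simpa using h3
    rw [le_div_iff₀ (by positivity)]
    linarith
  have hcau := Complex.norm_iteratedDeriv_le_of_forall_mem_sphere_norm_le k (half_pos hR0)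
    (f := F) (c := z) ((hF.mono (by
      rw [closure_ball _ (half_pos hR0).ne']
      exact (closedBall_subset_closedBall (by linarith)).trans hin)).diffContOnCl) hsph
  have hD : ‖iteratedDeriv k F z‖ * R ^ (2 + b + k) ≤
      (k.factorial * 4 * 2 ^ k / Real.pi) * (R ^ b * I) := by
    calc _ ≤ (k.factorial * (I * 4 / (Real.pi * R ^ 2)) / (R / 2) ^ k) * R ^ (2 + b + k) := by gcongr
      _ = _ := by
        rw [Real.rpow_add hR0, Real.rpow_add hR0, Real.rpow_natCast, Real.rpow_ofNat, div_pow]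
        field_simp
  have hw : ENNReal.ofReal (R ^ b * I) ≤ ENNReal.ofReal (6 ^ |b| / (1 + b) * Real.pi) *
      ∫⁻ w in ball z R, ENNReal.ofReal (‖F w‖ ^ (1 : ℝ) * stdW b w) ∂dA := by
    rw [dA, Measure.restrict_smul, lintegral_smul_measure, smul_eq_mul,
      ENNReal.ofReal_mul (by positivity : (0 : ℝ) ≤ 6 ^ |b| / (1 + b)), mul_assoc,
      ← mul_assoc (ENNReal.ofReal Real.pi),
      ENNReal.mul_inv_cancel (by simpa using Real.pi_pos) ENNReal.ofReal_ne_top, one_mul,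
      ENNReal.ofReal_mul (by positivity), ENNReal.ofReal_coe_nnreal, ← hI,
      ← lintegral_const_mul' _ _ ENNReal.ofReal_ne_top,
      ← lintegral_const_mul' _ _ ENNReal.ofReal_ne_top]
    refine setLIntegral_mono' measurableSet_ball fun w hw => ?_
    rw [mem_ball_iff_norm] at hw
    have w1 : ‖w‖ ≤ ‖z‖ + ‖w - z‖ := by
      simpa using norm_add_le z (w - z)
    have w2 : ‖z‖ ≤ ‖w‖ + ‖w - z‖ := by
      rw [norm_sub_rev]; simpa using norm_add_le w (z - w)
    have y1 : R ≤ 1 - ‖w‖ ^ 2 := by nlinarith [norm_nonneg w]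
    have y2 : 1 - ‖w‖ ^ 2 ≤ 6 * R := by nlinarith [norm_nonneg w]
    have hRb : R ^ b ≤ 6 ^ |b| * (1 - ‖w‖ ^ 2) ^ b := by
      rcases le_or_gt 0 b with h | h
      · have h6 : (1 : ℝ) ≤ 6 ^ |b| := Real.one_le_rpow (by norm_num) (abs_nonneg b)
        have : R ^ b ≤ (1 - ‖w‖ ^ 2) ^ b := Real.rpow_le_rpow hR0.le y1 h
        have : 0 ≤ (1 - ‖w‖ ^ 2) ^ b := Real.rpow_nonneg (by linarith) _
        nlinarith
      · have h6 : (6 * R) ^ b ≤ (1 - ‖w‖ ^ 2) ^ b :=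
          Real.rpow_le_rpow_of_nonpos (by linarith) y2 h.le
        rw [Real.mul_rpow (by norm_num) hR0.le] at h6
        rw [abs_of_neg h]
        calc R ^ b = 6 ^ (-b) * (6 ^ b * R ^ b) := by
              rw [← mul_assoc, ← Real.rpow_add (by norm_num)]; simp
          _ ≤ _ := by gcongr
    rw [← ofReal_norm, ← ENNReal.ofReal_mul (by positivity), ← ENNReal.ofReal_mul (by positivity)]
    refine ENNReal.ofReal_le_ofReal ?_
    rw [Real.rpow_one, stdW]
    calc R ^ b * ‖F w‖ ≤ (6 ^ |b| * (1 - ‖w‖ ^ 2) ^ b) * ‖F w‖ := by gcongr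
      _ = _ := by field_simp
  calc _ ≤ ENNReal.ofReal ((k.factorial * 4 * 2 ^ k / Real.pi) * (R ^ b * I)) :=
        ENNReal.ofReal_le_ofReal hD
    _ ≤ _ := by
      rw [ENNReal.ofReal_mul (by positivity), ENNReal.ofReal_mul (by positivity : 0 ≤
        (k.factorial * 4 * 2 ^ k / Real.pi : ℝ)), mul_assoc (ENNReal.ofReal _)]
      exact mul_le_mul_right hw _

/-! ### Differentiating the Toeplitz integral -/

lemma one_sub_re_pos {z w : ℂ} (hz : ‖z‖ < 1) (hw : ‖w‖ < 1) :
    0 < (1 - z * (starRingEnd ℂ) w).re := by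
  have h1 := Complex.re_le_norm (z * (starRingEnd ℂ) w)
  rw [norm_mul, RCLike.norm_conj] at h1
  rw [Complex.sub_re, Complex.one_re]
  nlinarith [norm_nonneg z, norm_nonneg w]

/-- The integral `∫ h(w) (1 - z w̄)^{-c} dμ(w)` over the unit disk. -/
noncomputable def kerInt (μ : Measure ℂ) (h : ℂ → ℂ) (c : ℝ) (z : ℂ) : ℂ :=
  ∫ w in ball (0 : ℂ) 1, h w * (1 - z * (starRingEnd ℂ) w) ^ (((-c : ℝ)) : ℂ) ∂μ

lemma toep_eq (μ : Measure ℂ) (b : ℝ) (f : ℂ → ℂ) : Toep μ b f = kerInt μ f (2 + b) := by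
  funext z
  refine integral_congr_ae (ae_of_all _ fun w => ?_)
  dsimp only
  rw [Complex.ofReal_neg, Complex.cpow_neg, div_eq_mul_inv]

lemma continuousOn_kernel {z : ℂ} (hz : ‖z‖ < 1) (c : ℝ) :
    ContinuousOn (fun w => (1 - z * (starRingEnd ℂ) w) ^ (((-c : ℝ)) : ℂ)) (ball (0 : ℂ) 1) := by
  refine ContinuousOn.cpow_const ?_ fun w hw => Or.inl (one_sub_re_pos hz (mem_ball_zero_iff.1 hw))
  exact (continuous_const.sub (continuous_const.mul Complex.continuous_conj)).continuousOn

lemma norm_kernel_le {ρ : ℝ} (hρ : ρ < 1) {z w : ℂ} (hz : ‖z‖ ≤ ρ) (hw : ‖w‖ < 1) {c : ℝ}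
    (hc : 0 ≤ c) : ‖(1 - z * (starRingEnd ℂ) w) ^ (((-c : ℝ)) : ℂ)‖ ≤ (1 - ρ) ^ (-c) := by
  rw [Complex.norm_cpow_real]
  refine Real.rpow_le_rpow_of_nonpos (by linarith) ?_ (by linarith)
  have h1 := norm_sub_norm_le 1 (z * (starRingEnd ℂ) w)
  rw [norm_mul, RCLike.norm_conj, norm_one] at h1
  nlinarith [norm_nonneg z, norm_nonneg w]

section
variable {μ : Measure ℂ} [IsFiniteMeasure μ] {h : ℂ → ℂ}

lemma integrable_kernel (hm : AEStronglyMeasurable h (μ.restrict (ball 0 1))) {M : ℝ}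
    (hM : ∀ w ∈ ball (0 : ℂ) 1, ‖h w‖ ≤ M) {c : ℝ} (hc : 0 ≤ c) {z : ℂ} (hz : ‖z‖ < 1) :
    Integrable (fun w => h w * (1 - z * (starRingEnd ℂ) w) ^ (((-c : ℝ)) : ℂ))
      (μ.restrict (ball 0 1)) := by
  refine Integrable.of_bound (hm.mul ((continuousOn_kernel hz c).aestronglyMeasurable
    measurableSet_ball)) (M * (1 - ‖z‖) ^ (-c)) ?_
  filter_upwards [ae_restrict_mem measurableSet_ball] with w hw
  rw [norm_mul]
  have := hM w hw
  have := (norm_nonneg _).trans this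
  have := norm_kernel_le hz le_rfl (mem_ball_zero_iff.1 hw) hc
  gcongr

lemma hasDerivAt_kerInt (hm : AEStronglyMeasurable h (μ.restrict (ball 0 1))) {M : ℝ}
    (hM : ∀ w ∈ ball (0 : ℂ) 1, ‖h w‖ ≤ M) {c : ℝ} (hc : 0 ≤ c) {z : ℂ} (hz : ‖z‖ < 1) :
    HasDerivAt (kerInt μ h c) (c * kerInt μ (fun w => h w * (starRingEnd ℂ) w) (c + 1) z) z := by
  set ρ := (1 + ‖z‖) / 2 with hρ
  have hρ1 : ρ < 1 := by linarith
  have hzρ : ‖z‖ < ρ := by linarith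
  have hs : ball (0 : ℂ) ρ ∈ 𝓝 z := isOpen_ball.mem_nhds (mem_ball_zero_iff.2 hzρ)
  have hm' : AEStronglyMeasurable (fun w => h w * (starRingEnd ℂ) w) (μ.restrict (ball 0 1)) :=
    hm.mul Complex.continuous_conj.aestronglyMeasurable
  have key := hasDerivAt_integral_of_dominated_loc_of_deriv_le (μ := μ.restrict (ball 0 1))
    (F := fun z w => h w * (1 - z * (starRingEnd ℂ) w) ^ (((-c : ℝ)) : ℂ))
    (F' := fun z w => c * (h w * (starRingEnd ℂ) w *
      (1 - z * (starRingEnd ℂ) w) ^ (((-(c + 1) : ℝ)) : ℂ)))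
    (bound := fun _ => c * (M * (1 - ρ) ^ (-(c + 1)))) (x₀ := z) hs ?_
    (integrable_kernel hm hM hc hz) ?_ ?_ (integrable_const _) ?_
  · convert! key.2 using 1
    rw [kerInt, integral_const_mul]
  · filter_upwards [isOpen_ball.mem_nhds (mem_ball_zero_iff.2 hz)] with x hx
    exact hm.mul ((continuousOn_kernel (mem_ball_zero_iff.1 hx) c).aestronglyMeasurable
      measurableSet_ball)
  · exact (hm'.mul ((continuousOn_kernel hz _).aestronglyMeasurable measurableSet_ball)).const_mul _
  · filter_upwards [ae_restrict_mem measurableSet_ball] with w hw x hx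
    have h1 := norm_kernel_le hρ1 (mem_ball_zero_iff.1 hx).le (mem_ball_zero_iff.1 hw)
      (show 0 ≤ c + 1 by linarith)
    have h2 := hM w hw
    have h3 := (norm_nonneg _).trans h2
    have h4 := mem_ball_zero_iff.1 hw
    rw [norm_mul, norm_mul, norm_mul, RCLike.norm_conj, Complex.norm_real, Real.norm_of_nonneg hc]
    have : ‖h w‖ * ‖w‖ ≤ M := by nlinarith [norm_nonneg (h w), norm_nonneg w]
    gcongr
  · filter_upwards [ae_restrict_mem measurableSet_ball] with w hw x hx
    have hx1 : ‖x‖ < 1 := (mem_ball_zero_iff.1 hx).trans hρ1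
    have := ((((hasDerivAt_id x).mul_const ((starRingEnd ℂ) w)).const_sub 1).cpow_const
      (c := ((-c : ℝ) : ℂ)) (Or.inl (one_sub_re_pos hx1 (mem_ball_zero_iff.1 hw)))).const_mul (h w)
    convert! this using 1
    have e : (((-(c + 1) : ℝ)) : ℂ) = ((-c : ℝ) : ℂ) - 1 := by push_cast; ring
    rw [e]
    simp
    ring

/-- Each derivative in `z` brings down a factor `w̄` and raises the exponent of the kernel by one. -/
lemma iteratedDeriv_kerInt (hm : AEStronglyMeasurable h (μ.restrict (ball 0 1))) {M : ℝ}
    (hM : ∀ w ∈ ball (0 : ℂ) 1, ‖h w‖ ≤ M) {c : ℝ} (hc : 0 ≤ c) (k : ℕ) : ∀ z : ℂ, ‖z‖ < 1 →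
    iteratedDeriv k (kerInt μ h c) z = ((∏ j ∈ Finset.range k, (c + j) : ℝ) : ℂ) *
      kerInt μ (fun w => h w * (starRingEnd ℂ) w ^ k) (c + k) z := by
  induction k with
  | zero => intro z hz; simp
  | succ k ih =>
    intro z hz
    have hm' : AEStronglyMeasurable (fun w => h w * (starRingEnd ℂ) w ^ k)
        (μ.restrict (ball 0 1)) :=
      hm.mul (Complex.continuous_conj.pow k).aestronglyMeasurable
    have hM' : ∀ w ∈ ball (0 : ℂ) 1, ‖h w * (starRingEnd ℂ) w ^ k‖ ≤ M := by
      intro w hw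
      have h2 := hM w hw
      have h4 := mem_ball_zero_iff.1 hw
      rw [norm_mul, norm_pow, RCLike.norm_conj]
      have := pow_le_one₀ (n := k) (norm_nonneg w) h4.le
      nlinarith [norm_nonneg (h w)]
    have hd := (hasDerivAt_kerInt hm' hM' (show 0 ≤ c + k by positivity) hz).const_mul
      (((∏ j ∈ Finset.range k, (c + j) : ℝ) : ℂ))
    have hev : iteratedDeriv k (kerInt μ h c) =ᶠ[𝓝 z] fun z =>
        ((∏ j ∈ Finset.range k, (c + j) : ℝ) : ℂ) *
          kerInt μ (fun w => h w * (starRingEnd ℂ) w ^ k) (c + k) z := by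
      filter_upwards [isOpen_ball.mem_nhds (mem_ball_zero_iff.2 hz)] with x hx
      exact ih x (mem_ball_zero_iff.1 hx)
    rw [iteratedDeriv_succ, hev.deriv_eq, hd.deriv, Finset.prod_range_succ, ← mul_assoc,
      ← Complex.ofReal_mul]
    simp only [pow_succ, mul_assoc]
    congr 2
    push_cast
    ring

end

/-! ### Test functions -/

/-- The test function `(1 - |z|²)^{s-2-a} w^k (1 - z̄ w)^{-s}`, a multiple of a kernel function
normalized in `L¹(ω_a)`. -/
noncomputable def testF (a s : ℝ) (k : ℕ) (z w : ℂ) : ℂ :=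
  (((1 - ‖z‖ ^ 2) ^ (s - 2 - a) : ℝ) : ℂ) *
    (w ^ k * (1 - (starRingEnd ℂ) z * w) ^ (((-s : ℝ)) : ℂ))

lemma one_sub_mem_slit {z w : ℂ} (hz : ‖z‖ < 1) (hw : ‖w‖ < 1) :
    1 - (starRingEnd ℂ) z * w ∈ slitPlane := by
  refine Or.inl ?_
  have := one_sub_re_pos hw hz
  rwa [mul_comm] at this

lemma differentiableOn_testF (a s : ℝ) (k : ℕ) {z : ℂ} (hz : ‖z‖ < 1) :
    DifferentiableOn ℂ (testF a s k z) (ball 0 1) := by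
  intro w hw
  have : DifferentiableAt ℂ (fun w => 1 - (starRingEnd ℂ) z * w) w := by fun_prop
  have := this.cpow_const (c := ((-s : ℝ) : ℂ)) (one_sub_mem_slit hz (mem_ball_zero_iff.1 hw))
  exact (((differentiableAt_id.pow k).mul this).const_mul _).differentiableWithinAt

lemma norm_testF_le (a s : ℝ) (k : ℕ) {z w : ℂ} (hz : ‖z‖ < 1) (hw : ‖w‖ < 1) :
    ‖testF a s k z w‖ ≤ (1 - ‖z‖ ^ 2) ^ (s - 2 - a) * ‖1 - (starRingEnd ℂ) z * w‖ ^ (-s) := by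
  have h1 : 0 < 1 - ‖z‖ ^ 2 := by nlinarith [norm_nonneg z]
  rw [testF, norm_mul, norm_mul, norm_pow, Complex.norm_cpow_real, Complex.norm_real,
    Real.norm_of_nonneg (by positivity)]
  have := pow_le_one₀ (n := k) (norm_nonneg w) hw.le
  have h3 : 0 ≤ ‖1 - (starRingEnd ℂ) z * w‖ ^ (-s) := by positivity
  gcongr
  nlinarith

lemma testF_bounded {a s : ℝ} (hs : 0 ≤ s) (k : ℕ) {z : ℂ} (hz : ‖z‖ < 1) :
    ∀ w ∈ ball (0 : ℂ) 1, ‖testF a s k z w‖ ≤ (1 - ‖z‖ ^ 2) ^ (s - 2 - a) * (1 - ‖z‖) ^ (-s) := by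
  intro w hw
  have hw := mem_ball_zero_iff.1 hw
  have h1 : 0 < 1 - ‖z‖ ^ 2 := by nlinarith [norm_nonneg z]
  refine (norm_testF_le a s k hz hw).trans ?_
  have : ‖1 - (starRingEnd ℂ) z * w‖ ^ (-s) ≤ (1 - ‖z‖) ^ (-s) := by
    refine Real.rpow_le_rpow_of_nonpos (by linarith) ?_ (by linarith)
    have h1 := norm_sub_norm_le 1 ((starRingEnd ℂ) z * w)
    rw [norm_mul, RCLike.norm_conj, norm_one] at h1
    nlinarith [norm_nonneg z, norm_nonneg w]
  gcongr

lemma wnorm_one (a : ℝ) (f : ℂ → ℂ) : wnorm 1 a f =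
    ∫⁻ z in ball (0 : ℂ) 1, ENNReal.ofReal (‖f z‖ ^ (1 : ℝ) * stdW a z) ∂dA := by
  simp [wnorm]

/-- The test functions are uniformly bounded in `L¹(ω_a)`. -/
lemma wnorm_testF_le {a s : ℝ} (ha : -1 < a) (hs : 4 + 2 * a ≤ s) (k : ℕ) :
    ∃ M : ℝ≥0, ∀ z : ℂ, ‖z‖ < 1 → wnorm 1 a (testF a s k z) ≤ M := by
  have ha' : 0 < 1 + a := by linarith
  have hfin : (ENNReal.ofReal Real.pi)⁻¹ * (ENNReal.ofReal (1 + a) *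
      (ENNReal.ofReal (2 ^ (s - 4 - 2 * a)) *
        ∫⁻ u in ball (0 : ℂ) 1, ENNReal.ofReal ((1 - ‖u‖ ^ 2) ^ a))) ≠ ⊤ := by
    refine ENNReal.mul_ne_top ?_ (ENNReal.mul_ne_top ENNReal.ofReal_ne_top
      (ENNReal.mul_ne_top ENNReal.ofReal_ne_top (lintegral_weight_lt_top ha).ne))
    simpa using Real.pi_pos
  refine ⟨_, fun z hz => le_trans ?_ (ENNReal.coe_toNNReal hfin).ge⟩
  rw [wnorm_one, dA, Measure.restrict_smul, lintegral_smul_measure,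
    smul_eq_mul]
  refine mul_le_mul_right ((?_ : _ ≤ _).trans
    (mul_le_mul_right (lintegral_kernel_le hs hz) _)) _
  rw [← lintegral_const_mul' _ _ ENNReal.ofReal_ne_top]
  refine setLIntegral_mono' measurableSet_ball fun w hw => ?_
  have hw := mem_ball_zero_iff.1 hw
  rw [← ENNReal.ofReal_mul ha'.le]
  refine ENNReal.ofReal_le_ofReal ?_
  have h2 : 0 ≤ (1 - ‖w‖ ^ 2) ^ a := Real.rpow_nonneg (by nlinarith [norm_nonneg w]) _
  rw [Real.rpow_one, stdW]
  calc _ ≤ ((1 - ‖z‖ ^ 2) ^ (s - 2 - a) * ‖1 - (starRingEnd ℂ) z * w‖ ^ (-s)) *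
        ((1 + a) * (1 - ‖w‖ ^ 2) ^ a) := by
        gcongr
        exact norm_testF_le a s k hz hw
    _ = _ := by ring

lemma measurableSet_pD (z : ℂ) (r : ℝ) : MeasurableSet (pD z r) := by
  have : pD z r = ball 0 1 ∩ {w | ‖(z - w) / (1 - (starRingEnd ℂ) z * w)‖ < r} := rfl
  rw [this]
  refine measurableSet_ball.inter (measurableSet_lt ?_ measurable_const)
  fun_prop

/-- On `D(z, r)` the quantity `|1 - z̄w|` is comparable to `1 - |z|²`. -/
lemma pD_bound {r : ℝ} (hr : r ∈ Ioo (0 : ℝ) 1) {z w : ℂ} (hz : ‖z‖ < 1) (hw : w ∈ pD z r) :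
    ‖1 - (starRingEnd ℂ) z * w‖ ≤ (1 - ‖z‖ ^ 2) / (1 - r) ∧
      ‖z‖ - r * ((1 - ‖z‖ ^ 2) / (1 - r)) ≤ ‖w‖ := by
  obtain ⟨hr0, hr1⟩ := hr
  have hw1 := mem_ball_zero_iff.1 hw.1
  have hN : 0 < ‖1 - (starRingEnd ℂ) z * w‖ := by simpa using one_sub_ne hz hw1
  have h1 : ‖z - w‖ < r * ‖1 - (starRingEnd ℂ) z * w‖ := by
    have := hw.2
    rwa [norm_div, div_lt_iff₀ hN] at this
  have h2 : ‖1 - (starRingEnd ℂ) z * w‖ ≤ (1 - ‖z‖ ^ 2) / (1 - r) := by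
    rw [le_div_iff₀ (by linarith)]
    have hc : (starRingEnd ℂ) z * z = ((‖z‖ ^ 2 : ℝ) : ℂ) := by
      rw [Complex.conj_mul']; push_cast; rfl
    have e : 1 - (starRingEnd ℂ) z * w = ((1 - ‖z‖ ^ 2 : ℝ) : ℂ) + (starRingEnd ℂ) z * (z - w) := by
      rw [mul_sub, hc]; push_cast; ring
    have h3 := norm_add_le ((1 - ‖z‖ ^ 2 : ℝ) : ℂ) ((starRingEnd ℂ) z * (z - w))
    rw [← e, norm_mul, RCLike.norm_conj, Complex.norm_real, Real.norm_of_nonneg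
      (by nlinarith [norm_nonneg z])] at h3
    nlinarith [norm_nonneg (z - w), norm_nonneg z]
  refine ⟨h2, ?_⟩
  have h3 := norm_sub_norm_le z w
  nlinarith

/-- The positivity step: the `k`-th derivative at `z` of the Toeplitz operator applied to the
test function at `z` is an integral of a positive function, hence dominates `μ(D(z, r))`. -/
lemma iteratedDeriv_toep_ge {μ : Measure ℂ} [IsFiniteMeasure μ] {a b : ℝ} (hb : -1 < b) (k : ℕ)
    {r : ℝ} (hr : r ∈ Ioo (0 : ℝ) 1) {z : ℂ} (hz : ‖z‖ < 1)
    (hz2 : 1 / 2 ≤ ‖z‖ - r * ((1 - ‖z‖ ^ 2) / (1 - r))) :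
    (∏ j ∈ Finset.range k, (2 + b + j)) * ((1 - ‖z‖ ^ 2) ^ (2 + b + k - 2 - a) *
      ((1 / 2) ^ (2 * k) * ((1 - ‖z‖ ^ 2) / (1 - r)) ^ (-(2 * (2 + b + k))))) * μ.real (pD z r) ≤
    ‖iteratedDeriv k (Toep μ b (testF a (2 + b + k) k z)) z‖ := by
  set s := 2 + b + k with hs
  have hk : (0 : ℝ) ≤ k := Nat.cast_nonneg k
  have hs0 : 0 < s := by linarith
  have hX : 0 < 1 - ‖z‖ ^ 2 := by nlinarith [norm_nonneg z]
  have hP : 0 < ∏ j ∈ Finset.range k, (2 + b + j) :=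
    Finset.prod_pos fun j _ => by
      have : (0 : ℝ) ≤ j := Nat.cast_nonneg j
      linarith
  have hm : AEStronglyMeasurable (testF a s k z) (μ.restrict (ball 0 1)) :=
    (differentiableOn_testF a s k hz).continuousOn.aestronglyMeasurable measurableSet_ball
  have hM := testF_bounded (a := a) hs0.le k hz
  -- The test function at `z` is, up to `w^k`, conjugate to the differentiated kernel, so that the
  -- integrand of the `k`-th derivative is the nonnegative function `q`.
  let q : ℂ → ℝ := fun w => (1 - ‖z‖ ^ 2) ^ (s - 2 - a) *
    (‖w‖ ^ (2 * k) * ‖1 - (starRingEnd ℂ) z * w‖ ^ (-(2 * s)))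
  have hq : ∀ w ∈ ball (0 : ℂ) 1, testF a s k z w * (starRingEnd ℂ) w ^ k *
      (1 - z * (starRingEnd ℂ) w) ^ (((-s : ℝ)) : ℂ) = (q w : ℂ) := by
    intro w hw
    have hw := mem_ball_zero_iff.1 hw
    have hN : 0 < ‖1 - (starRingEnd ℂ) z * w‖ := by simpa using one_sub_ne hz hw
    have e1 : (1 - z * (starRingEnd ℂ) w) ^ (((-s : ℝ)) : ℂ) =
        (starRingEnd ℂ) ((1 - (starRingEnd ℂ) z * w) ^ (((-s : ℝ)) : ℂ)) := by
      have := Complex.conj_cpow (1 - (starRingEnd ℂ) z * w) ((-s : ℝ) : ℂ)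
        (Complex.mem_slitPlane_iff_arg.1 (one_sub_mem_slit hz hw)).1
      rw [Complex.conj_ofReal] at this
      rw [← this]
      simp
    have e2 : ‖1 - (starRingEnd ℂ) z * w‖ ^ (-(2 * s)) =
        ‖(1 - (starRingEnd ℂ) z * w) ^ (((-s : ℝ)) : ℂ)‖ ^ 2 := by
      rw [Complex.norm_cpow_real, ← Real.rpow_natCast, ← Real.rpow_mul hN.le]
      congr 1; push_cast; ring
    simp only [q]
    rw [e1, e2, testF]
    generalize (1 - (starRingEnd ℂ) z * w) ^ (((-s : ℝ)) : ℂ) = E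
    have e3 : (starRingEnd ℂ) E * E = ((‖E‖ ^ 2 : ℝ) : ℂ) := by
      rw [Complex.conj_mul']; push_cast; rfl
    have e4 : (starRingEnd ℂ) w ^ k * w ^ k = ((‖w‖ ^ (2 * k) : ℝ) : ℂ) := by
      rw [← mul_pow, Complex.conj_mul', pow_mul]; push_cast; rfl
    rw [Complex.ofReal_mul, Complex.ofReal_mul, ← e3, ← e4]
    ring
  have hint : IntegrableOn q (ball 0 1) μ := by
    have h1 := integrable_kernel (μ := μ) (h := fun w => testF a s k z w * (starRingEnd ℂ) w ^ k)
      (M := (1 - ‖z‖ ^ 2) ^ (s - 2 - a) * (1 - ‖z‖) ^ (-s))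
      (hm.mul (Complex.continuous_conj.pow k).aestronglyMeasurable) (fun w hw => by
        have h2 := hM w hw
        have h4 := mem_ball_zero_iff.1 hw
        rw [norm_mul, norm_pow, RCLike.norm_conj]
        have := pow_le_one₀ (n := k) (norm_nonneg w) h4.le
        nlinarith [norm_nonneg (testF a s k z w)]) hs0.le hz
    refine (h1.re).congr ?_
    filter_upwards [ae_restrict_mem measurableSet_ball] with w hw
    rw [hq w hw]
    simp
  have hD : iteratedDeriv k (Toep μ b (testF a s k z)) z =
      (((∏ j ∈ Finset.range k, (2 + b + j)) * ∫ w in ball (0 : ℂ) 1, q w ∂μ : ℝ) : ℂ) := by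
    rw [toep_eq, iteratedDeriv_kerInt hm hM (by linarith : 0 ≤ 2 + b) k z hz, kerInt,
      Complex.ofReal_mul]
    congr 1
    rw [← integral_complex_ofReal]
    exact setIntegral_congr_fun measurableSet_ball hq
  have hq0 : ∀ w, 0 ≤ q w := fun w => by positivity
  have hge : (1 - ‖z‖ ^ 2) ^ (s - 2 - a) *
      ((1 / 2) ^ (2 * k) * ((1 - ‖z‖ ^ 2) / (1 - r)) ^ (-(2 * s))) * μ.real (pD z r) ≤
      ∫ w in ball (0 : ℂ) 1, q w ∂μ := by
    have hsub : pD z r ⊆ ball 0 1 := fun w hw => hw.1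
    refine le_trans ?_ (setIntegral_mono_set hint (ae_of_all _ hq0) hsub.eventuallyLE)
    refine setIntegral_ge_of_const_le_real (measurableSet_pD z r) (measure_ne_top _ _) ?_
      (hint.mono_set hsub)
    intro w hw
    obtain ⟨b1, b2⟩ := pD_bound hr hz hw
    have hN : 0 < ‖1 - (starRingEnd ℂ) z * w‖ := by
      simpa using one_sub_ne hz (mem_ball_zero_iff.1 hw.1)
    have : (1 - ‖z‖ ^ 2) / (1 - r) > 0 := div_pos hX (by linarith [hr.2])
    have c1 : ((1 - ‖z‖ ^ 2) / (1 - r)) ^ (-(2 * s)) ≤ ‖1 - (starRingEnd ℂ) z * w‖ ^ (-(2 * s)) :=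
      Real.rpow_le_rpow_of_nonpos hN b1 (by linarith)
    have c2 : (1 / 2 : ℝ) ≤ ‖w‖ := hz2.trans b2
    simp only [q]
    gcongr
  rw [hD, Complex.norm_real, Real.norm_of_nonneg
    (mul_nonneg hP.le (setIntegral_nonneg measurableSet_ball fun w _ => hq0 w)), mul_assoc]
  gcongr

/-- The lower bound of `iteratedDeriv_toep_ge` in scale-invariant form: all powers of `1 - |z|²`
cancel. -/
lemma iteratedDeriv_toep_lower {μ : Measure ℂ} [IsFiniteMeasure μ] {a b : ℝ} (hb : -1 < b) (k : ℕ)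
    {r : ℝ} (hr : r ∈ Ioo (0 : ℝ) 1) {ε : ℝ} {z : ℂ} (hz : ‖z‖ < 1)
    (hz2 : 1 / 2 ≤ ‖z‖ - r * ((1 - ‖z‖ ^ 2) / (1 - r)))
    (hμ : ENNReal.ofReal (ε * (1 - ‖z‖ ^ 2) ^ (a + 2)) ≤ μ (pD z r)) :
    (∏ j ∈ Finset.range k, (2 + b + j)) * ((1 / 2) ^ (2 * k) * (1 - r) ^ (2 * (2 + b + k)) * ε *
      4 ^ (-(2 + b + k))) ≤
    ‖iteratedDeriv k (Toep μ b (testF a (2 + b + k) k z)) z‖ *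
      ((1 - ‖z‖) / 2) ^ (2 + b + k) := by
  have key := iteratedDeriv_toep_ge (μ := μ) (a := a) hb k hr hz hz2
  have hk : (0 : ℝ) ≤ k := Nat.cast_nonneg k
  have hs0 : 0 < 2 + b + k := by linarith
  have hX : 0 < 1 - ‖z‖ ^ 2 := by nlinarith [norm_nonneg z]
  have hr1 : 0 < 1 - r := by linarith [hr.2]
  have hP : 0 < ∏ j ∈ Finset.range k, (2 + b + j) :=
    Finset.prod_pos fun j _ => by
      have : (0 : ℝ) ≤ j := Nat.cast_nonneg j
      linarith
  have hμ' : ε * (1 - ‖z‖ ^ 2) ^ (a + 2) ≤ μ.real (pD z r) :=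
    (ENNReal.ofReal_le_iff_le_toReal (measure_ne_top _ _)).1 hμ
  have hR : (1 - ‖z‖ ^ 2) / 4 ≤ (1 - ‖z‖) / 2 := by nlinarith [norm_nonneg z]
  generalize 2 + b + k = s at *
  generalize 1 - ‖z‖ ^ 2 = X at *
  have hcancel : X ^ (s - 2 - a) * X ^ (-(2 * s)) * X ^ (a + 2) * X ^ s = 1 := by
    rw [← Real.rpow_add hX, ← Real.rpow_add hX, ← Real.rpow_add hX]
    ring_nf
    simp
  have e1 : (X / (1 - r)) ^ (-(2 * s)) = X ^ (-(2 * s)) * (1 - r) ^ (2 * s) := by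
    rw [Real.div_rpow hX.le hr1.le, Real.rpow_neg hr1.le, div_inv_eq_mul]
  have e2 : (X / 4) ^ s = X ^ s * 4 ^ (-s) := by
    rw [Real.div_rpow hX.le (by norm_num), Real.rpow_neg (by norm_num), div_eq_mul_inv]
  calc _ = (∏ j ∈ Finset.range k, (2 + b + j)) * ((1 / 2) ^ (2 * k) * (1 - r) ^ (2 * s) * ε *
        4 ^ (-s)) * (X ^ (s - 2 - a) * X ^ (-(2 * s)) * X ^ (a + 2) * X ^ s) := by
        rw [hcancel, mul_one]
    _ = (∏ j ∈ Finset.range k, (2 + b + j)) * (X ^ (s - 2 - a) *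
        ((1 / 2) ^ (2 * k) * (X / (1 - r)) ^ (-(2 * s)))) * (ε * X ^ (a + 2)) * (X / 4) ^ s := by
        rw [e1, e2]; ring
    _ ≤ (∏ j ∈ Finset.range k, (2 + b + j)) * (X ^ (s - 2 - a) *
        ((1 / 2) ^ (2 * k) * (X / (1 - r)) ^ (-(2 * s)))) * μ.real (pD z r) * (X / 4) ^ s := by
        gcongr
    _ ≤ _ := by gcongr

/-! ### Passage to the limit -/

lemma differentiableOn_toep {μ : Measure ℂ} [IsFiniteMeasure μ] {a b s : ℝ} (hb : -1 < b)
    (hs : 0 ≤ s) (k : ℕ) {z : ℂ} (hz : ‖z‖ < 1) :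
    DifferentiableOn ℂ (Toep μ b (testF a s k z)) (ball 0 1) := by
  rw [toep_eq]
  intro w hw
  exact (hasDerivAt_kerInt ((differentiableOn_testF a s k hz).continuousOn.aestronglyMeasurable
    measurableSet_ball) (testF_bounded (a := a) hs k hz) (by linarith)
    (mem_ball_zero_iff.1 hw)).differentiableAt.differentiableWithinAt

/-- The shrinking disks used for the Cauchy estimate see asymptotically nothing of a fixed
integrable function, by absolute continuity of the integral. -/
lemma tendsto_lintegral_ball {g : ℂ → ℝ≥0∞} (hg : ∫⁻ w in ball (0 : ℂ) 1, g w ∂dA ≠ ⊤)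
    {z : ℕ → ℂ} (hz : ∀ n, ‖z n‖ < 1) (hlim : Tendsto (fun n => ‖z n‖) atTop (𝓝 1)) :
    Tendsto (fun n => ∫⁻ w in ball (z n) ((1 - ‖z n‖) / 2), g w ∂dA) atTop (𝓝 0) := by
  have hR : Tendsto (fun n => (1 - ‖z n‖) / 2) atTop (𝓝 0) := by
    have := (hlim.const_sub 1).div_const 2
    simpa using this
  have hvol : Tendsto (fun n => dA (ball (z n) ((1 - ‖z n‖) / 2))) atTop (𝓝 0) := by
    have h1 : Tendsto (fun n => ENNReal.ofReal (((1 - ‖z n‖) / 2) ^ 2)) atTop (𝓝 0) := by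
      simpa using ENNReal.tendsto_ofReal (hR.pow 2)
    refine h1.congr fun n => ?_
    have h2 : (NNReal.pi : ℝ≥0∞) = ENNReal.ofReal Real.pi := by
      rw [← NNReal.coe_real_pi, ENNReal.ofReal_coe_nnreal]
    rw [dA, Measure.smul_apply, Complex.volume_ball, smul_eq_mul, h2, mul_comm, mul_assoc,
      ENNReal.mul_inv_cancel (by simpa using Real.pi_pos) ENNReal.ofReal_ne_top, mul_one,
      ENNReal.ofReal_pow (by linarith [hz n])]
  have := tendsto_setLIntegral_zero hg (s := fun n => ball (z n) ((1 - ‖z n‖) / 2)) (l := atTop)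
    (tendsto_of_tendsto_of_tendsto_of_le_of_le tendsto_const_nhds hvol (fun _ => zero_le)
      fun n => Measure.restrict_apply_le _ _)
  refine this.congr fun n => ?_
  rw [Measure.restrict_restrict measurableSet_ball, inter_eq_left.2]
  refine ball_subset_ball' ?_
  rw [dist_zero_right]
  linarith [hz n]

end BergmanToeplitz

theorem stmt13 (a b : ℝ) (ha : -1 < a) (hb : -1 < b)
    (μ : Measure ℂ) [IsFiniteMeasure μ]
    (hcpt : ∀ f : ℕ → ℂ → ℂ,
      (∀ n, DifferentiableOn ℂ (f n) (ball (0 : ℂ) 1)) →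
      (∃ M : ℝ≥0, ∀ n, wnorm 1 a (f n) ≤ M) →
      ∃ φ : ℕ → ℕ, StrictMono φ ∧ ∃ g : ℂ → ℂ,
        DifferentiableOn ℂ g (ball (0 : ℂ) 1) ∧ wnorm 1 b g ≠ ⊤ ∧
        Tendsto (fun k => wnorm 1 b fun z => Toep μ b (f (φ k)) z - g z) atTop (𝓝 0)) :
    ∀ r ∈ Set.Ioo (0 : ℝ) 1, ∀ ε > (0 : ℝ), ∃ δ ∈ Set.Ioo (0 : ℝ) 1,
      ∀ z ∈ ball (0 : ℂ) 1, δ < ‖z‖ →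
        μ (pD z r) < ENNReal.ofReal (ε * (1 - ‖z‖ ^ 2) ^ (a + 2)) := by
  intro r hr ε hε
  by_contra hcon
  push Not at hcon
  have hδ : ∀ n : ℕ, 1 - 1 / ((n : ℝ) + 2) ∈ Set.Ioo (0 : ℝ) 1 := by
    intro n
    have hn : (0 : ℝ) ≤ n := Nat.cast_nonneg n
    have h1 : 1 / ((n : ℝ) + 2) < 1 := by rw [div_lt_one (by linarith)]; linarith
    have h2 : 0 < 1 / ((n : ℝ) + 2) := by positivity
    constructor <;> linarith
  choose z hz hzδ hzμ using fun n : ℕ => hcon _ (hδ n)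
  have hz1 : ∀ n, ‖z n‖ < 1 := fun n => mem_ball_zero_iff.1 (hz n)
  have hlim : Tendsto (fun n => ‖z n‖) atTop (𝓝 1) := by
    have h1 : Tendsto (fun n : ℕ => 1 - 1 / ((n : ℝ) + 2)) atTop (𝓝 1) := by
      have h2 : Tendsto (fun n : ℕ => (n : ℝ) + 2) atTop atTop :=
        tendsto_atTop_add_const_right _ _ tendsto_natCast_atTop_atTop
      simpa using (h2.inv_tendsto_atTop).const_sub 1
    exact tendsto_of_tendsto_of_tendsto_of_le_of_le h1 tendsto_const_nhds
      (fun n => (hzδ n).le) (fun n => (hz1 n).le)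
  -- The order `k` of the derivative is chosen to make the test functions bounded in `L¹(ω_a)`,
  -- see `lintegral_kernel_le`.
  obtain ⟨k, hk⟩ := exists_nat_ge (2 + 2 * a - b)
  have hs : 4 + 2 * a ≤ 2 + b + k := by linarith
  obtain ⟨M, hM⟩ := BergmanToeplitz.wnorm_testF_le ha hs k
  obtain ⟨φ, hφ, G, hG, hGfin, hconv⟩ := hcpt
    (fun n => BergmanToeplitz.testF a (2 + b + k) k (z n))
    (fun n => BergmanToeplitz.differentiableOn_testF _ _ _ (hz1 n)) ⟨M, fun n => hM _ (hz1 n)⟩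
  obtain ⟨C, hC, hest⟩ := BergmanToeplitz.iteratedDeriv_estimate hb k
  rw [BergmanToeplitz.wnorm_one] at hGfin
  have hsmall := BergmanToeplitz.tendsto_lintegral_ball hGfin (fun n => hz1 (φ n))
    (hlim.comp hφ.tendsto_atTop)
  have hub := ENNReal.Tendsto.const_mul (a := ENNReal.ofReal C) (hconv.add hsmall)
    (Or.inr ENNReal.ofReal_ne_top)
  rw [add_zero, mul_zero] at hub
  have hnear : ∀ᶠ n in atTop,
      1 / 2 ≤ ‖z (φ n)‖ - r * ((1 - ‖z (φ n)‖ ^ 2) / (1 - r)) := by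
    have h1 : Tendsto (fun n => ‖z (φ n)‖) atTop (𝓝 1) := hlim.comp hφ.tendsto_atTop
    have h2 := h1.sub ((((h1.pow 2).const_sub 1).div_const (1 - r)).const_mul r)
    refine h2.eventually (eventually_ge_nhds ?_)
    norm_num
  have hpos : 0 < (∏ j ∈ Finset.range k, (2 + b + j)) *
      ((1 / 2) ^ (2 * k) * (1 - r) ^ (2 * (2 + b + k)) * ε * 4 ^ (-(2 + b + k))) := by
    have hr1 : 0 < 1 - r := by linarith [hr.2]
    have hP : 0 < ∏ j ∈ Finset.range k, (2 + b + j) := Finset.prod_pos fun j _ => by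
      have : (0 : ℝ) ≤ j := Nat.cast_nonneg j
      linarith
    positivity
  -- `hub` says that the upper bound for the scaled derivatives tends to `0`, while they stay
  -- above a fixed positive constant.
  refine absurd (ge_of_tendsto hub ?_) (not_le.2 (ENNReal.ofReal_pos.2 hpos))
  filter_upwards [hnear] with n hn
  refine (ENNReal.ofReal_le_ofReal (BergmanToeplitz.iteratedDeriv_toep_lower hb k hr
    (hz1 (φ n)) hn (hzμ (φ n)))).trans ?_
  refine (hest _ _ (BergmanToeplitz.differentiableOn_toep hb (by linarith) k (hz1 (φ n)))
    (hz1 (φ n))).trans (mul_le_mul_right ?_ _)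
  have hsub : ball (z (φ n)) ((1 - ‖z (φ n)‖) / 2) ⊆ ball 0 1 := by
    refine ball_subset_ball' ?_
    rw [dist_zero_right]
    linarith [hz1 (φ n)]
  have hmeas : AEMeasurable (fun w => ENNReal.ofReal (‖G w‖ ^ (1 : ℝ) * stdW b w))
      (dA.restrict (ball (z (φ n)) ((1 - ‖z (φ n)‖) / 2))) := by
    have h1 : AEMeasurable G (dA.restrict (ball (z (φ n)) ((1 - ‖z (φ n)‖) / 2))) :=
      (hG.continuousOn.mono hsub).aemeasurable measurableSet_ball
    have h2 : Measurable (stdW b) := by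
      unfold stdW
      fun_prop
    exact ((h1.norm.pow_const _).mul h2.aemeasurable).ennreal_ofReal
  rw [BergmanToeplitz.wnorm_one]
  refine le_trans ?_ (add_le_add_left (lintegral_mono_set hsub) _)
  rw [← lintegral_add_right' _ hmeas]
  refine setLIntegral_mono' measurableSet_ball fun w hw => ?_
  have hw0 : 0 ≤ stdW b w := by
    have h1 := mem_ball_zero_iff.1 (hsub hw)
    exact mul_nonneg (by linarith) (Real.rpow_nonneg (by nlinarith [norm_nonneg w]) _)
  rw [Real.rpow_one, Real.rpow_one, Real.rpow_one, ← ENNReal.ofReal_add (by positivity)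
    (by positivity), ← add_mul]
  refine ENNReal.ofReal_le_ofReal (mul_le_mul_of_nonneg_right ?_ hw0)
  simpa using norm_add_le (Toep μ b (BergmanToeplitz.testF a (2 + b + k) k (z (φ n))) w - G w) (G w)
end

section
/- Let $-1<\alpha,\beta<\infty$. The Toeplitz operator $T_{\mu,\beta}:L^1_a(\omega_\alpha)\to L^1_a(\omega_\beta)$ is compact (in the Banach-space sense) if and only if for every sequence $\{f_j\}$ bounded in $L^1_a(\omega_\alpha)$ that converges to $0$ uniformly on compact subsets of $\mathbb{D}$ one has $\lim_{j\to\infty}\|T_{\mu,\beta}(f_j)\|_{L^1(\omega_\beta)}=0$. -/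
/-!
Compactness of `T_{μ,b}` is compared with the vanishing property that bounded locally uniformly
null sequences are mapped to norm-null sequences. Only `μ` finite is available, so nothing is
known a priori about the pairing of `μ` with functions in `L¹_a(ω_a)`; if `f` is not
`μ`-integrable on the disk, then the defining Bochner integral is `0` and `T f = 0` on the disk
(`toep_eq_zero`).

For integrable `f`, expanding the kernel `(1 - z w̄)^{-(2+b)} = ∑ c_j (z w̄)^j` shows that `T f` has
Taylor coefficients `c_j ∫ f w̄^j dμ` (`toep_hasSer`). The constants `c_j` are exactly those for
which the `j`-th Taylor coefficient of a holomorphic `F` is at most `c_j ∫ |F| |z|^j ω_b dA`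
(`coef_bound`, integration of Cauchy's estimate over radii), whence
`|∫ f w̄^j dμ| ≤ ∫ |T f| |z|^j ω_b dA` (`mom_le`).

*Vanishing implies compact* (`subseq_of_vanishing`). For a bounded sequence the Taylor coefficients
lie in a compact product of disks, so along a subsequence they all converge, and differences of far
terms of this subsequence are locally uniformly null. By the vanishing property their images are
norm-null, so the images form a Cauchy sequence, and `L¹_a(ω_b)` is complete (`complete`).

*Compact implies vanishing* (`vanishing_of_subseq`). Let `T u_{φ k} → g` in norm with `u_k` bounded
and pointwise null. To see `g = 0` it is enough that `∫ u_k w̄^j dμ → 0` for every `j`. There is no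
integrable majorant of the `u_k` for `μ`, so consider instead
`y^p_{k,i} = ∫ u_k w̄^j |w|^{2i} (1-|w|²)^p dμ`.
* For `p ≥ 2 + a` the pointwise bound `|u_k(w)| ≤ M (1-|w|)^{-(2+a)}` gives a constant majorant,
  so `y^p_{k,i} → 0` as `k → ∞` (`dmom_tendsto`).
* `y^p_{k,i} → 0` as `i → ∞`, uniformly in `k` (`dmom_uniform`): for `p = 0` it is a moment of
  `w^i u_k` of order `i + j`, hence at most `∫ |T(w^i u_k)| |z|^{i+j} ω_b dA`, and the functions
  `T(w^i u_k)` form a relatively compact set, over which `∫ |F| |z|^n ω_b dA → 0` as `n → ∞`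
  uniformly.
* `y^p_{k,i} - y^p_{k,i+1} = y^{p+1}_{k,i}`, so the two previous facts propagate `y^p_{k,i} → 0`
  from large `p` down to `p = 0` by telescoping (`tendsto_of_difference`).
-/

open MeasureTheory Metric Filter Complex Set
open scoped ENNReal NNReal Topology

/-! ### Taylor coefficients of the kernel -/

/-- The `k`-th Taylor coefficient of `(1-x)^{-(2+b)}`, written through the Beta function so that
`1 / cc b k` is visibly the radial moment `∫ |z|^{2k} ω_b dA`. -/
noncomputable def cc (b : ℝ) (k : ℕ) : ℝ := 1 / ((1 + b) * ProbabilityTheory.beta (k + 1) (b + 1))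

lemma cc_pos {b : ℝ} (hb : -1 < b) (k : ℕ) : 0 < cc b k := by
  have := ProbabilityTheory.beta_pos (α := (k : ℝ) + 1) (β := b + 1) (by positivity) (by linarith)
  have h1 : 0 < 1 + b := by linarith
  unfold cc; positivity

lemma cc_succ {b : ℝ} (hb : -1 < b) (k : ℕ) :
    ((k : ℝ) + 1) * cc b (k + 1) = cc b k * (2 + b + k) := by
  have hk : (0 : ℝ) < k + 1 := by positivity
  have h1 : 0 < 1 + b := by linarith
  have h2 : 0 < b + 1 := by linarith
  have h3 : 0 < (k : ℝ) + 1 + (b + 1) := by linarith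
  have g1 := Real.Gamma_pos_of_pos hk
  have g2 := Real.Gamma_pos_of_pos h2
  have g3 := Real.Gamma_pos_of_pos h3
  unfold cc ProbabilityTheory.beta
  have e1 : Real.Gamma ((k + 1 : ℕ) + 1 : ℝ) = (k + 1) * Real.Gamma (k + 1) := by
    rw [← Real.Gamma_add_one hk.ne']; push_cast; rfl
  have e2 : Real.Gamma ((k + 1 : ℕ) + 1 + (b + 1) : ℝ)
      = (k + 1 + (b + 1)) * Real.Gamma (k + 1 + (b + 1)) := by
    rw [← Real.Gamma_add_one h3.ne']; push_cast; ring_nf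
  rw [e1, e2]
  field_simp
  ring

lemma cc_zero {b : ℝ} (hb : -1 < b) : cc b 0 = 1 := by
  have h2 : 0 < b + 1 := by linarith
  have g2 := Real.Gamma_pos_of_pos h2
  unfold cc ProbabilityTheory.beta
  have e2 : Real.Gamma ((0 : ℕ) + 1 + (b + 1) : ℝ) = (b + 1) * Real.Gamma (b + 1) := by
    rw [← Real.Gamma_add_one h2.ne']; push_cast; ring_nf
  rw [e2]
  have : (1 + b) ≠ 0 := by linarith
  simp
  field_simp
  ring

lemma cc_eq {b : ℝ} (hb : -1 < b) (k : ℕ) :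
    (Ring.choose (((2 + b : ℝ) : ℂ) + k - 1) k : ℂ) = cc b k := by
  rw [show (((2 + b : ℝ) : ℂ) + k - 1) = (((2 + b) + k - 1 : ℝ) : ℂ) by push_cast; ring,
    ← Complex.ofReal_choose, ← Ring.multichoose_eq]
  congr 1
  induction k with
  | zero => simp [cc_zero hb]
  | succ k ih =>
    have h1 := Ring.factorial_nsmul_multichoose_eq_ascPochhammer (2 + b) k
    have h2 := Ring.factorial_nsmul_multichoose_eq_ascPochhammer (2 + b) (k + 1)
    rw [ascPochhammer_succ_right, Polynomial.smeval_mul, ← h1, ih] at h2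
    have h3 := cc_succ hb k
    simp [Nat.factorial_succ, Polynomial.smeval_add, Polynomial.smeval_natCast] at h2
    have hf : (k.factorial : ℝ) ≠ 0 := by positivity
    have hk : (k + 1 : ℝ) ≠ 0 := by positivity
    apply mul_left_cancel₀ hk
    apply mul_left_cancel₀ hf
    linear_combination h2 - k.factorial * h3

lemma hasSum_kernel {b : ℝ} (hb : -1 < b) {x : ℂ} (hx : ‖x‖ < 1) :
    HasSum (fun k => (cc b k : ℂ) * x ^ k) (1 / (1 - x) ^ ((2 + b : ℝ) : ℂ)) := by
  have h := (Complex.one_div_one_sub_cpow_hasFPowerSeriesOnBall_zero ((2 + b : ℝ) : ℂ)).hasSum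
    (y := x) (by
      rw [Metric.mem_eball, edist_eq_enorm_sub, sub_zero, ← ofReal_norm, ENNReal.ofReal_lt_one]
      exact hx)
  simpa only [FormalMultilinearSeries.ofScalars_apply_eq, cc_eq hb, zero_add, smul_eq_mul] using h

lemma hasSum_kernel_real {b : ℝ} (hb : -1 < b) {r : ℝ} (h0 : 0 ≤ r) (hr : r < 1) :
    HasSum (fun k => cc b k * r ^ k) (1 / (1 - r) ^ (2 + b)) := by
  have h := hasSum_kernel hb (x := (r : ℂ)) (by simpa [abs_of_nonneg h0] using hr)
  rw [← Complex.hasSum_ofReal]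
  convert h using 1
  · ext; simp
  · rw [← Complex.ofReal_one, ← Complex.ofReal_sub, ← Complex.ofReal_cpow (by linarith)]
    simp

/-- In polar coordinates, `∫ |z|^{2k} ω_b dA = 1 / cc b k`. -/
lemma radial {b : ℝ} (hb : -1 < b) (k : ℕ) :
    ∫⁻ r in Ioo (0 : ℝ) 1, ENNReal.ofReal (2 * r * (r ^ k * r ^ k * ((1 + b) * (1 - r ^ 2) ^ b)))
      = ENNReal.ofReal (1 / cc b k) := by
  have hB := ProbabilityTheory.beta_pos (α := (k : ℝ) + 1) (β := b + 1) (by positivity) (by linarith)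
  have h1 : 0 < 1 + b := by linarith
  have himg : (fun r : ℝ => r ^ 2) '' Ioo 0 1 = Ioo 0 1 := by
    ext t
    constructor
    · rintro ⟨r, ⟨h0, h1⟩, rfl⟩
      exact ⟨by positivity, by nlinarith⟩
    · rintro ⟨h0, h1⟩
      exact ⟨√t, ⟨Real.sqrt_pos.2 h0, by rw [Real.sqrt_lt' one_pos]; simpa using h1⟩,
        Real.sq_sqrt h0.le⟩
  -- Substitute `t = r²` to reach the Beta integral.
  have key := lintegral_image_eq_lintegral_abs_deriv_mul (f := fun r : ℝ => r ^ 2)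
    (f' := fun r => 2 * r) (s := Ioo (0 : ℝ) 1) measurableSet_Ioo
    (fun x _ => by simpa using (hasDerivAt_pow 2 x).hasDerivWithinAt)
    (fun x hx y hy h => by
      have := (sq_eq_sq₀ hx.1.le hy.1.le).1 h
      exact this)
    (fun t => ENNReal.ofReal ((1 + b) * (t ^ ((k : ℝ) + 1 - 1) * (1 - t) ^ (b + 1 - 1))))
  rw [himg] at key
  have lhs : ∫⁻ t in Ioo (0 : ℝ) 1,
      ENNReal.ofReal ((1 + b) * (t ^ ((k : ℝ) + 1 - 1) * (1 - t) ^ (b + 1 - 1)))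
      = ENNReal.ofReal (1 / cc b k) := by
    have hp := ProbabilityTheory.lintegral_betaPDF_eq_one (α := (k : ℝ) + 1) (β := b + 1)
      (by positivity) (by linarith)
    rw [ProbabilityTheory.lintegral_betaPDF] at hp
    have : ∀ t ∈ Ioo (0 : ℝ) 1,
        ENNReal.ofReal ((1 + b) * (t ^ ((k : ℝ) + 1 - 1) * (1 - t) ^ (b + 1 - 1)))
        = ENNReal.ofReal (1 / cc b k) * ENNReal.ofReal (1 / ProbabilityTheory.beta (k + 1) (b + 1) *
          t ^ ((k : ℝ) + 1 - 1) * (1 - t) ^ (b + 1 - 1)) := by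
      intro t ht
      rw [← ENNReal.ofReal_mul (by have := cc_pos hb k; positivity)]
      congr 1
      unfold cc
      field_simp
    rw [setLIntegral_congr_fun measurableSet_Ioo this, lintegral_const_mul' _ _ (by simp), hp,
      mul_one]
  rw [← lhs, key]
  refine setLIntegral_congr_fun measurableSet_Ioo fun r hr => ?_
  have hr0 := hr.1
  rw [← ENNReal.ofReal_mul (by positivity), abs_of_pos (by positivity)]
  congr 1
  have : (r ^ 2) ^ ((k : ℝ) + 1 - 1) = r ^ k * r ^ k := by
    rw [add_sub_cancel_right, Real.rpow_natCast]; ring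
  rw [this, add_sub_cancel_right]
  ring

/-! ### Weighted masses and Taylor coefficients -/

/-- `F` is the sum on the unit disk of the power series with coefficients `a`; outside the disk `F`
is unconstrained. -/
def HasSer (F : ℂ → ℂ) (a : ℕ → ℂ) : Prop :=
  ∀ z ∈ ball (0 : ℂ) 1, HasSum (fun j => a j * z ^ j) (F z)

/-- The mass `∫ |F| |z|^k ω_b dA` over the unit disk; for `k = 0` this is the `L¹(ω_b)` norm. -/
noncomputable def mass (b : ℝ) (F : ℂ → ℂ) (k : ℕ) : ℝ≥0∞ :=
  ∫⁻ z in ball (0 : ℂ) 1, ENNReal.ofReal (‖F z‖ * ‖z‖ ^ k * stdW b z) ∂dA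

lemma wnorm_eq (b : ℝ) (F : ℂ → ℂ) : wnorm 1 b F = mass b F 0 := by
  simp [wnorm, mass]

lemma exists_hasSer {F : ℂ → ℂ} (hF : DifferentiableOn ℂ F (ball (0 : ℂ) 1)) :
    ∃ a, HasSer F a := by
  refine ⟨fun n => ((n.factorial : ℂ))⁻¹ * iteratedDeriv n F 0, fun z hz => ?_⟩
  have := Complex.hasSum_taylorSeries_on_ball (c := 0) (r := 1) (f := F) (by simpa using hF)
    (z := z) (by simpa using hz)
  refine (congrArg (HasSum · (F z)) (funext fun j => ?_)).mp this
  simp only [sub_zero, smul_eq_mul]; ring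

lemma HasSer.fps {F : ℂ → ℂ} {a : ℕ → ℂ} (h : HasSer F a) :
    HasFPowerSeriesOnBall F (FormalMultilinearSeries.ofScalars ℂ a) 0 1 where
  r_le := by
    refine ENNReal.le_of_forall_nnreal_lt fun r hr => ?_
    have hr' : (r : ℝ) < 1 := by exact_mod_cast hr
    refine FormalMultilinearSeries.le_radius_of_tendsto _ (l := 0) ?_
    have := (h (r : ℝ) (by simpa using hr')).summable.tendsto_atTop_zero.norm
    simpa [FormalMultilinearSeries.ofScalars_norm] using this
  r_pos := by simp
  hasSum {y} hy := by
    have hy' : y ∈ ball (0 : ℂ) 1 := by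
      rw [Metric.mem_eball, edist_eq_enorm_sub, sub_zero, ← ofReal_norm,
        ENNReal.ofReal_lt_one] at hy
      simpa using hy
    simpa only [FormalMultilinearSeries.ofScalars_apply_eq, zero_add, smul_eq_mul] using h y hy'

lemma HasSer.differentiableOn {F : ℂ → ℂ} {a : ℕ → ℂ} (h : HasSer F a) :
    DifferentiableOn ℂ F (ball (0 : ℂ) 1) := by
  have := h.fps.differentiableOn
  rwa [← ENNReal.ofReal_one, Metric.eball_ofReal] at this

lemma HasSer.sub {F G : ℂ → ℂ} {a c : ℕ → ℂ} (h : HasSer F a) (h' : HasSer G c) :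
    HasSer (fun z => F z - G z) (fun j => a j - c j) := fun z hz => by
  simpa [sub_mul] using (h z hz).sub (h' z hz)

/-- Cauchy's estimate for the `k`-th coefficient in its `L¹` form on the circle of radius `r`. -/
lemma circle_bound {F : ℂ → ℂ} {a : ℕ → ℂ} (h : HasSer F a) (k : ℕ) {r : ℝ} (hr : r ∈ Ioo (0 : ℝ) 1) :
    ENNReal.ofReal (2 * Real.pi * ‖a k‖ * r ^ k) ≤
      ∫⁻ θ in Ioo (-Real.pi) Real.pi, ENNReal.ofReal ‖F (circleMap 0 r θ)‖ := by
  obtain ⟨hr0, hr1⟩ := hr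
  have hsub : closedBall (0 : ℂ) r ⊆ ball 0 1 := closedBall_subset_ball hr1
  have hd := (h.differentiableOn.mono hsub)
  lift r to ℝ≥0 using hr0.le
  -- Uniqueness of power series identifies `a k` with the Cauchy integral over the circle.
  have e := HasFPowerSeriesAt.eq_formalMultilinearSeries h.fps.hasFPowerSeriesAt
    (hd.hasFPowerSeriesOnBall (by exact_mod_cast hr0)).hasFPowerSeriesAt
  have hb := norm_cauchyPowerSeries_le F 0 r k
  rw [← e, FormalMultilinearSeries.ofScalars_norm] at hb
  have hcont : Continuous fun θ => ‖F (circleMap 0 r θ)‖ := by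
    refine (hd.continuousOn.comp_continuous (continuous_circleMap 0 r) fun θ => ?_).norm
    exact circleMap_mem_closedBall _ r.2 _
  have hper : Function.Periodic (fun θ => ‖F (circleMap 0 r θ)‖) (2 * Real.pi) := fun θ => by
    simp [periodic_circleMap 0 r θ]
  have := hper.intervalIntegral_add_eq 0 (-Real.pi)
  rw [zero_add, show -Real.pi + 2 * Real.pi = Real.pi by ring] at this
  rw [this, intervalIntegral.integral_of_le (by linarith [Real.pi_pos])] at hb
  rw [restrict_Ioo_eq_restrict_Ioc, ← ofReal_integral_eq_lintegral_ofReal]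
  · apply ENNReal.ofReal_le_ofReal
    have hrk : (0 : ℝ) < (r : ℝ) ^ k := by positivity
    have hpi := Real.pi_pos
    rw [abs_of_pos hr0, inv_pow] at hb
    calc _ ≤ 2 * Real.pi * ((2 * Real.pi)⁻¹ * (∫ θ in Ioc (-Real.pi) Real.pi,
          ‖F (circleMap 0 r θ)‖) * ((r : ℝ) ^ k)⁻¹) * r ^ k := by gcongr
      _ = _ := by field_simp
  · exact (hcont.integrableOn_Icc).mono_set Ioc_subset_Icc_self
  · exact Eventually.of_forall fun _ => norm_nonneg _

lemma stdW_nonneg {b : ℝ} (hb : -1 < b) {z : ℂ} (hz : ‖z‖ < 1) : 0 ≤ stdW b z := by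
  have : 0 ≤ 1 - ‖z‖ ^ 2 := by nlinarith [norm_nonneg z]
  have h1 : 0 ≤ 1 + b := by linarith
  unfold stdW; positivity

lemma stdW_continuousOn (b : ℝ) : ContinuousOn (stdW b) (ball 0 1) := by
  refine continuousOn_const.mul (ContinuousOn.rpow_const (by fun_prop) fun z hz => Or.inl ?_)
  have : ‖z‖ < 1 := by simpa using hz
  nlinarith [norm_nonneg z]

/-- `|a_k| ≤ c_k ∫ |F| |z|^k ω_b dA`: multiply Cauchy's estimate on `|z| = r` by
`r^{k+1} (1+b)(1-r²)^b` and integrate over `r`, using `radial`. -/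
lemma coef_bound {b : ℝ} (hb : -1 < b) {F : ℂ → ℂ} {a : ℕ → ℂ} (h : HasSer F a) (k : ℕ) :
    ENNReal.ofReal ‖a k‖ ≤ ENNReal.ofReal (cc b k) * mass b F k := by
  have hpi := Real.pi_pos
  set g : ℂ → ℝ≥0∞ := fun z => ENNReal.ofReal (‖F z‖ * ‖z‖ ^ k * stdW b z) with hg
  have hFc := h.differentiableOn.continuousOn
  have hgc : ContinuousOn g (ball 0 1) := by
    refine ENNReal.continuous_ofReal.comp_continuousOn ?_
    exact (hFc.norm.mul (by fun_prop)).mul (stdW_continuousOn b)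
  have hpol : ∀ p : ℝ × ℝ, Complex.polarCoord.symm p = circleMap 0 p.1 p.2 := fun p => by
    simp [circleMap, Complex.exp_mul_I]
  have hnorm : ∀ {r θ : ℝ}, r ∈ Ioo (0 : ℝ) 1 → ‖circleMap 0 r θ‖ = r := fun {r θ} hr => by
    simp [abs_of_pos hr.1]
  have hmem : ∀ {r θ : ℝ}, r ∈ Ioo (0 : ℝ) 1 → circleMap 0 r θ ∈ ball (0 : ℂ) 1 :=
    fun {r θ} hr => by rw [mem_ball_zero_iff, hnorm hr]; exact hr.2
  have h1 : ∫⁻ r in Ioo (0 : ℝ) 1, ∫⁻ θ in Ioo (-Real.pi) Real.pi,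
      ENNReal.ofReal r * g (circleMap 0 r θ) ≤ ∫⁻ z in ball (0 : ℂ) 1, g z := by
    rw [← lintegral_indicator measurableSet_ball, ← Complex.lintegral_comp_polarCoord_symm,
      polarCoord_target]
    have hs : Ioo (0 : ℝ) 1 ×ˢ Ioo (-Real.pi) Real.pi ⊆ Ioi 0 ×ˢ Ioo (-Real.pi) Real.pi :=
      prod_mono Ioo_subset_Ioi_self subset_rfl
    refine le_trans (le_of_eq ?_) (lintegral_mono_set hs)
    rw [Measure.volume_eq_prod, setLIntegral_prod]
    · refine setLIntegral_congr_fun measurableSet_Ioo fun r hr => ?_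
      refine setLIntegral_congr_fun measurableSet_Ioo fun θ hθ => ?_
      simp only [hpol, smul_eq_mul]
      rw [indicator_of_mem (hmem hr)]
    · have hc : ContinuousOn (fun p : ℝ × ℝ => g (circleMap 0 p.1 p.2))
          (Ioo (0 : ℝ) 1 ×ˢ Ioo (-Real.pi) Real.pi) :=
        hgc.comp (by unfold circleMap; fun_prop) fun p hp => hmem hp.1
      have hm : AEMeasurable (fun p : ℝ × ℝ => ENNReal.ofReal p.1 * g (circleMap 0 p.1 p.2))
          (((volume : Measure ℝ).prod volume).restrict
            (Ioo (0 : ℝ) 1 ×ˢ Ioo (-Real.pi) Real.pi)) :=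
        (ENNReal.measurable_ofReal.comp measurable_fst).aemeasurable.mul
          (hc.aemeasurable (measurableSet_Ioo.prod measurableSet_Ioo))
      refine hm.congr ?_
      refine (ae_restrict_mem (measurableSet_Ioo.prod measurableSet_Ioo)).mono fun p hp => ?_
      simp only [hpol, smul_eq_mul]
      rw [indicator_of_mem (hmem hp.1)]
  have h2 : ENNReal.ofReal (Real.pi * ‖a k‖) * ENNReal.ofReal (1 / cc b k) ≤
      ∫⁻ z in ball (0 : ℂ) 1, g z := by
    refine le_trans ?_ h1
    rw [← radial hb k, ← lintegral_const_mul' _ _ (by simp)]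
    refine setLIntegral_mono_ae' measurableSet_Ioo (Eventually.of_forall fun r hr => ?_)
    have hr0 := hr.1
    have hw : 0 ≤ (1 + b) * (1 - r ^ 2) ^ b := by
      have := stdW_nonneg hb (z := circleMap 0 r 0) (by rw [hnorm hr]; exact hr.2)
      simpa [stdW, hnorm hr] using this
    have : ∀ θ, ENNReal.ofReal r * g (circleMap 0 r θ) =
        ENNReal.ofReal (r * (r ^ k * ((1 + b) * (1 - r ^ 2) ^ b))) *
          ENNReal.ofReal ‖F (circleMap 0 r θ)‖ := fun θ => by
      rw [hg]
      simp only [stdW, hnorm hr]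
      rw [← ENNReal.ofReal_mul hr0.le, ← ENNReal.ofReal_mul (by positivity)]
      congr 1; ring
    simp_rw [this]
    rw [lintegral_const_mul' _ _ (by simp)]
    refine le_trans (le_of_eq ?_) (mul_le_mul_right (circle_bound h k hr) _)
    rw [← ENNReal.ofReal_mul (by positivity), ← ENNReal.ofReal_mul (by positivity)]
    congr 1; ring
  have h3 : mass b F k = (ENNReal.ofReal Real.pi)⁻¹ * ∫⁻ z in ball (0 : ℂ) 1, g z := by
    unfold mass dA
    rw [Measure.restrict_smul, lintegral_smul_measure, smul_eq_mul]
  have hc := cc_pos hb k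
  calc ENNReal.ofReal ‖a k‖ = ENNReal.ofReal (cc b k) * ((ENNReal.ofReal Real.pi)⁻¹ *
        (ENNReal.ofReal (Real.pi * ‖a k‖) * ENNReal.ofReal (1 / cc b k))) := by
        rw [← ENNReal.ofReal_inv_of_pos hpi, ← ENNReal.ofReal_mul (by positivity),
          ← ENNReal.ofReal_mul (by positivity), ← ENNReal.ofReal_mul (by positivity)]
        congr 1; field_simp
    _ ≤ _ := by rw [h3]; gcongr

/-! ### Norm estimates, convergence and completeness -/

lemma mass_congr {b : ℝ} {F G : ℂ → ℂ} (k : ℕ) (h : EqOn F G (ball 0 1)) :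
    mass b F k = mass b G k :=
  setLIntegral_congr_fun measurableSet_ball fun z hz => by simp only [h hz]

lemma mass_zero {b : ℝ} {F : ℂ → ℂ} (k : ℕ) (h : ∀ z ∈ ball (0 : ℂ) 1, F z = 0) :
    mass b F k = 0 := by
  rw [mass_congr (G := fun _ => 0) k h]; simp [mass]

lemma mass_mono {b : ℝ} (hb : -1 < b) {F G : ℂ → ℂ} {k l : ℕ} (hkl : l ≤ k)
    (h : ∀ z ∈ ball (0 : ℂ) 1, ‖F z‖ ≤ ‖G z‖) : mass b F k ≤ mass b G l := by
  refine setLIntegral_mono_ae' measurableSet_ball (Eventually.of_forall fun z hz => ?_)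
  have hz' : ‖z‖ < 1 := by simpa using hz
  have := stdW_nonneg hb hz'
  have h2 : ‖z‖ ^ k ≤ ‖z‖ ^ l := pow_le_pow_of_le_one (norm_nonneg _) hz'.le hkl
  have := h z hz
  gcongr

lemma mass_aemeas (b : ℝ) {F : ℂ → ℂ} (hF : ContinuousOn F (ball 0 1)) (k : ℕ) :
    AEMeasurable (fun z => ENNReal.ofReal (‖F z‖ * ‖z‖ ^ k * stdW b z))
      (dA.restrict (ball (0 : ℂ) 1)) := by
  refine ContinuousOn.aemeasurable ?_ measurableSet_ball
  refine ENNReal.continuous_ofReal.comp_continuousOn ?_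
  exact (hF.norm.mul (by fun_prop)).mul (stdW_continuousOn b)

lemma mass_triangle {b : ℝ} (hb : -1 < b) {F G H : ℂ → ℂ} (k : ℕ)
    (hG : ContinuousOn G (ball 0 1)) (h : ∀ z ∈ ball (0 : ℂ) 1, ‖F z‖ ≤ ‖G z‖ + ‖H z‖) :
    mass b F k ≤ mass b G k + mass b H k := by
  unfold mass
  rw [← lintegral_add_left' (mass_aemeas b hG k)]
  refine setLIntegral_mono_ae' measurableSet_ball (Eventually.of_forall fun z hz => ?_)
  have hz' : ‖z‖ < 1 := by simpa using hz
  have hw := stdW_nonneg hb hz'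
  rw [← ENNReal.ofReal_add (by positivity) (by positivity), ← add_mul, ← add_mul]
  have := h z hz
  gcongr

lemma mass_tendsto {b : ℝ} (hb : -1 < b) {F : ℂ → ℂ} (hF : ContinuousOn F (ball 0 1))
    (hfin : mass b F 0 ≠ ⊤) : Tendsto (fun k => mass b F k) atTop (𝓝 0) := by
  have := tendsto_lintegral_of_dominated_convergence' (μ := dA.restrict (ball (0 : ℂ) 1))
    (F := fun k z => ENNReal.ofReal (‖F z‖ * ‖z‖ ^ k * stdW b z)) (f := fun _ => 0)
    (fun z => ENNReal.ofReal (‖F z‖ * ‖z‖ ^ 0 * stdW b z)) (fun k => mass_aemeas b hF k)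
    (fun k => ?_) hfin ?_
  · simpa [mass] using this
  · filter_upwards [ae_restrict_mem measurableSet_ball] with z hz
    have hz' : ‖z‖ < 1 := by simpa using hz
    have := stdW_nonneg hb hz'
    have h2 : ‖z‖ ^ k ≤ ‖z‖ ^ 0 := pow_le_pow_of_le_one (norm_nonneg _) hz'.le (Nat.zero_le k)
    gcongr
  · filter_upwards [ae_restrict_mem measurableSet_ball] with z hz
    have hz' : ‖z‖ < 1 := by simpa using hz
    have := ((tendsto_pow_atTop_nhds_zero_of_lt_one (norm_nonneg z) hz').const_mul
      ‖F z‖).mul_const (stdW b z)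
    simpa using ENNReal.tendsto_ofReal this

lemma coef_le {b : ℝ} (hb : -1 < b) {F : ℂ → ℂ} {a : ℕ → ℂ} (h : HasSer F a) {M : ℝ≥0} {k : ℕ}
    (hM : mass b F k ≤ M) : ‖a k‖ ≤ cc b k * M := by
  have h1 := (coef_bound hb h k).trans (mul_le_mul_right hM _)
  have hc := cc_pos hb k
  rw [← ENNReal.ofReal_coe_nnreal, ← ENNReal.ofReal_mul hc.le] at h1
  exact (ENNReal.ofReal_le_ofReal_iff (by positivity)).1 h1

/-- The standard pointwise growth bound in `L¹_a(ω_b)`: sum `coef_le` against `∑ c_j |z|^j`. -/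
lemma growth {b : ℝ} (hb : -1 < b) {F : ℂ → ℂ} {a : ℕ → ℂ} (h : HasSer F a) {M : ℝ≥0}
    (hM : mass b F 0 ≤ M) {z : ℂ} (hz : z ∈ ball (0 : ℂ) 1) :
    ‖F z‖ ≤ 1 / (1 - ‖z‖) ^ (2 + b) * M := by
  have hz' : ‖z‖ < 1 := by simpa using hz
  have hs := (hasSum_kernel_real hb (norm_nonneg z) hz').mul_right (M : ℝ)
  rw [← (h z hz).tsum_eq]
  refine tsum_of_norm_bounded hs fun j => ?_
  have := coef_le hb h (k := j) ((mass_mono hb (Nat.zero_le j) fun _ _ => le_rfl).trans hM)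
  rw [norm_mul, norm_pow]
  calc _ ≤ cc b j * M * ‖z‖ ^ j := by gcongr
    _ = _ := by ring

/-- `L¹_a(ω_b)` is complete: by `growth` a norm-Cauchy sequence converges locally uniformly, and
Fatou's lemma upgrades this to norm convergence. -/
lemma complete {b : ℝ} (hb : -1 < b) {F : ℕ → ℂ → ℂ}
    (hF : ∀ n, DifferentiableOn ℂ (F n) (ball 0 1)) (hfin : ∀ n, mass b (F n) 0 ≠ ⊤)
    (hc : ∀ ε : ℝ≥0, 0 < ε → ∃ N, ∀ m ≥ N, ∀ n ≥ N, mass b (fun z => F m z - F n z) 0 ≤ ε) :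
    ∃ g : ℂ → ℂ, DifferentiableOn ℂ g (ball 0 1) ∧ mass b g 0 ≠ ⊤ ∧
      Tendsto (fun n => mass b (fun z => F n z - g z) 0) atTop (𝓝 0) := by
  have hU : ∀ r < (1 : ℝ), UniformCauchySeqOn F atTop (ball 0 r) := by
    intro r hr
    rw [Metric.uniformCauchySeqOn_iff]
    intro ε hε
    -- The maximum with `0` keeps `A` meaningful for nonpositive `r`, where the ball is empty.
    set A : ℝ := 1 / (1 - max r 0) ^ (2 + b) with hA
    have hr' : 0 < 1 - max r 0 := by simp [hr]
    have hApos : 0 < A := by positivity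
    obtain ⟨N, hN⟩ := hc (Real.toNNReal (ε / (2 * A))) (by simp; positivity)
    refine ⟨N, fun m hm n hn z hz => ?_⟩
    have hz' : ‖z‖ < r := by simpa using hz
    have hd : DifferentiableOn ℂ (fun z => F m z - F n z) (ball 0 1) := (hF m).sub (hF n)
    obtain ⟨a, ha⟩ := exists_hasSer hd
    have := growth hb ha (hN m hm n hn) (z := z) (by simpa using hz'.trans hr)
    rw [Real.coe_toNNReal _ (by positivity)] at this
    rw [dist_eq_norm]
    refine this.trans_lt ?_
    calc _ ≤ A * (ε / (2 * A)) := by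
          gcongr
          rw [hA]
          have : (1 - max r 0) ≤ 1 - ‖z‖ := by
            have := le_max_left r 0; linarith
          gcongr
          linarith
      _ < ε := by field_simp; linarith
  have hpt : ∀ z ∈ ball (0 : ℂ) 1, ∃ l, Tendsto (fun n => F n z) atTop (𝓝 l) := by
    intro z hz
    have hz' : ‖z‖ < 1 := by simpa using hz
    obtain ⟨r, h1, h2⟩ := exists_between hz'
    exact cauchySeq_tendsto_of_complete ((hU r h2).cauchySeq (by simpa using h1))
  choose! g hg using hpt
  have hloc : TendstoLocallyUniformlyOn F g atTop (ball 0 1) := by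
    rw [tendstoLocallyUniformlyOn_iff_forall_isCompact isOpen_ball]
    intro K hK hKc
    obtain ⟨r, hr, hKr⟩ := exists_lt_subset_ball hKc.isClosed hK
    exact ((hU r hr).mono hKr).tendstoUniformlyOn_of_tendsto fun z hz => hg z (hK hz)
  have hgd : DifferentiableOn ℂ g (ball 0 1) :=
    hloc.differentiableOn (Eventually.of_forall hF) isOpen_ball
  have hlim : Tendsto (fun n => mass b (fun z => F n z - g z) 0) atTop (𝓝 0) := by
    rw [ENNReal.tendsto_atTop_zero]
    intro ε hε
    obtain ⟨δ, hδ, hδε⟩ := ENNReal.lt_iff_exists_nnreal_btwn.1 hε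
    obtain ⟨N, hN⟩ := hc δ (by exact_mod_cast hδ)
    refine ⟨N, fun n hn => le_trans ?_ hδε.le⟩
    have hfat := lintegral_liminf_le' (μ := dA.restrict (ball (0 : ℂ) 1)) (u := atTop)
      (f := fun m z => ENNReal.ofReal (‖F n z - F m z‖ * ‖z‖ ^ 0 * stdW b z))
      (fun m => mass_aemeas b ((hF n).continuousOn.sub (hF m).continuousOn) 0)
    calc mass b (fun z => F n z - g z) 0 = _ := by
          refine setLIntegral_congr_fun measurableSet_ball fun z hz => ?_
          refine (Tendsto.liminf_eq ?_).symm
          exact ENNReal.tendsto_ofReal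
            ((((hg z hz).const_sub (F n z)).norm.mul_const _).mul_const _)
      _ ≤ _ := hfat
      _ ≤ δ := by
          refine liminf_le_of_frequently_le' (Eventually.frequently ?_)
          filter_upwards [eventually_ge_atTop N] with m hm using hN n hn m hm
  refine ⟨g, hgd, ?_, hlim⟩
  obtain ⟨n, hn⟩ := (hlim.eventually_lt_const (show (0 : ℝ≥0∞) < 1 by simp)).exists
  refine ne_top_of_le_ne_top (ENNReal.add_ne_top.2 ⟨hfin n, (hn.trans (by simp)).ne⟩)
    (mass_triangle hb (F := g) 0 (hF n).continuousOn fun z _ => ?_)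
  have := norm_sub_le (F n z) (F n z - g z)
  simpa using this

/-! ### Power series of the Toeplitz operator -/

/-- The moment `∫ f w̄^j dμ` over the unit disk; only meaningful for `μ`-integrable `f`. -/
noncomputable def mom (μ : Measure ℂ) (f : ℂ → ℂ) (j : ℕ) : ℂ :=
  ∫ w in ball (0 : ℂ) 1, f w * (starRingEnd ℂ) w ^ j ∂μ

lemma norm_mul_conj {z w : ℂ} (hz : z ∈ ball (0 : ℂ) 1) (hw : w ∈ ball (0 : ℂ) 1) :
    ‖z * (starRingEnd ℂ) w‖ < 1 := by
  have hz' : ‖z‖ < 1 := by simpa using hz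
  have hw' : ‖w‖ < 1 := by simpa using hw
  rw [norm_mul, RCLike.norm_conj]
  nlinarith [norm_nonneg z, norm_nonneg w]

/-- For fixed `z` in the disk the kernel is bounded away from `0` and `∞` on the disk, so the
integrand is integrable only if `f` is; otherwise the Bochner integral takes its value `0`. -/
lemma toep_eq_zero {μ : Measure ℂ} {b : ℝ} (hb : -1 < b) {f : ℂ → ℂ}
    (hf : ¬ IntegrableOn f (ball 0 1) μ) {z : ℂ} (hz : z ∈ ball (0 : ℂ) 1) :
    Toep μ b f z = 0 := by
  refine integral_undef fun hi => hf ?_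
  have hmeas : Measurable fun w : ℂ => (1 - z * (starRingEnd ℂ) w) ^ ((2 + b : ℝ) : ℂ) :=
    (measurable_const.sub
      (measurable_const.mul Complex.continuous_conj.measurable)).pow_const _
  have h2 : ∀ w ∈ ball (0 : ℂ) 1, 1 - z * (starRingEnd ℂ) w ≠ 0 := fun w hw h => by
    have := norm_mul_conj hz hw
    rw [← sub_eq_zero.1 h] at this
    simp at this
  have := hi.bdd_mul (c := 2 ^ (2 + b)) hmeas.aestronglyMeasurable ?_
  · refine this.congr ?_
    filter_upwards [ae_restrict_mem measurableSet_ball] with w hw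
    have : (1 - z * (starRingEnd ℂ) w) ^ ((2 + b : ℝ) : ℂ) ≠ 0 := by
      rw [Complex.cpow_def_of_ne_zero (h2 w hw)]; exact Complex.exp_ne_zero _
    field_simp
  · filter_upwards [ae_restrict_mem measurableSet_ball] with w hw
    have h3 := norm_sub_le 1 (z * (starRingEnd ℂ) w)
    have := norm_mul_conj hz hw
    rw [Complex.norm_cpow_real]
    refine Real.rpow_le_rpow (norm_nonneg _) ?_ (by linarith)
    simp only [norm_one] at h3
    linarith

lemma mom_integrable {μ : Measure ℂ} {f : ℂ → ℂ}
    (hf : IntegrableOn f (ball 0 1) μ) {p : ℂ → ℂ} (hp : Continuous p) {C : ℝ}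
    (hC : ∀ w ∈ ball (0 : ℂ) 1, ‖p w‖ ≤ C) :
    IntegrableOn (fun w => f w * p w) (ball 0 1) μ := by
  refine Integrable.mul_bdd (c := C) hf hp.aestronglyMeasurable ?_
  filter_upwards [ae_restrict_mem measurableSet_ball] with w hw using hC w hw

lemma norm_conj_pow_le (j : ℕ) : ∀ w ∈ ball (0 : ℂ) 1, ‖(starRingEnd ℂ) w ^ j‖ ≤ 1 := fun w hw => by
  have hw' : ‖w‖ < 1 := by simpa using hw
  rw [norm_pow, RCLike.norm_conj]
  exact pow_le_one₀ (norm_nonneg _) hw'.le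

lemma toep_hasSer {μ : Measure ℂ} {b : ℝ} (hb : -1 < b) {f : ℂ → ℂ}
    (hf : IntegrableOn f (ball 0 1) μ) :
    HasSer (Toep μ b f) (fun j => cc b j * mom μ f j) := by
  intro z hz
  have hz' : ‖z‖ < 1 := by simpa using hz
  have hcc : ∀ j, Continuous fun w : ℂ => (starRingEnd ℂ) w ^ j := fun j =>
    Complex.continuous_conj.pow j
  have hi : ∀ j, IntegrableOn (fun w => f w * (starRingEnd ℂ) w ^ j) (ball 0 1) μ := fun j =>
    mom_integrable hf (hcc j) (norm_conj_pow_le j)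
  -- Termwise integration is allowed since the series is dominated by `|f| ∑ c_j |z|^j`.
  have key := hasSum_integral_of_summable_integral_norm (μ := μ.restrict (ball (0 : ℂ) 1))
    (F := fun j w => (cc b j * z ^ j) * (f w * (starRingEnd ℂ) w ^ j))
    (fun j => (hi j).const_mul _) ?_
  · refine (congrArg₂ HasSum (funext fun j => ?_) ?_).mp key
    · simp only [integral_const_mul, mom]; ring
    · refine setIntegral_congr_fun measurableSet_ball fun w hw => ?_
      have := (hasSum_kernel hb (norm_mul_conj hz hw)).mul_left (f w)
      rw [div_eq_mul_one_div, ← this.tsum_eq]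
      refine tsum_congr fun j => ?_
      rw [mul_pow]; ring
  · refine Summable.of_nonneg_of_le (fun j => integral_nonneg fun _ => norm_nonneg _) (fun j => ?_)
      ((hasSum_kernel_real hb (norm_nonneg z) hz').summable.mul_right
        (∫ w in ball (0 : ℂ) 1, ‖f w‖ ∂μ))
    have hc := cc_pos hb j
    rw [← integral_const_mul]
    refine setIntegral_mono_on ((hi j).const_mul _).norm (hf.norm.const_mul _) measurableSet_ball
      fun w hw => ?_
    have h1 := norm_conj_pow_le j w hw
    rw [norm_mul, norm_mul, norm_mul, norm_pow z, Complex.norm_real, Real.norm_of_nonneg hc.le]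
    calc _ ≤ cc b j * ‖z‖ ^ j * (‖f w‖ * 1) := by gcongr
      _ = _ := by ring

lemma toep_sub {μ : Measure ℂ} {b : ℝ} (hb : -1 < b) {f g : ℂ → ℂ}
    (hf : IntegrableOn f (ball 0 1) μ) (hg : IntegrableOn g (ball 0 1) μ) {z : ℂ}
    (hz : z ∈ ball (0 : ℂ) 1) :
    Toep μ b (fun w => f w - g w) z = Toep μ b f z - Toep μ b g z := by
  refine (toep_hasSer hb (hf.sub hg) z hz).unique ?_
  refine (congrArg (HasSum · _) (funext fun j => ?_)).mp
    ((toep_hasSer hb hf).sub (toep_hasSer hb hg) z hz)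
  have hcc : Continuous fun w : ℂ => (starRingEnd ℂ) w ^ j := Complex.continuous_conj.pow j
  have : mom μ (f - g) j = mom μ f j - mom μ g j := by
    unfold mom
    rw [← integral_sub (mom_integrable hf hcc (norm_conj_pow_le j))
      (mom_integrable hg hcc (norm_conj_pow_le j))]
    congr 1; ext w; simp [sub_mul]
  simp only [this]; ring

/-- The constants `cc b j` in `toep_hasSer` and `coef_bound` cancel. -/
lemma mom_le {μ : Measure ℂ} {b : ℝ} (hb : -1 < b) {f : ℂ → ℂ}
    (hf : IntegrableOn f (ball 0 1) μ) (j : ℕ) :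
    ENNReal.ofReal ‖mom μ f j‖ ≤ mass b (Toep μ b f) j := by
  have h := coef_bound hb (toep_hasSer hb hf) j
  have hc := cc_pos hb j
  rw [norm_mul, Complex.norm_real, Real.norm_of_nonneg hc.le, ENNReal.ofReal_mul hc.le] at h
  exact (ENNReal.mul_le_mul_iff_right (by simpa using hc) (by simp)).1 h

/-! ### Vanishing on null sequences implies compactness -/

/-- Coefficientwise null sequences with the coefficient bounds of a norm-bounded sequence are
locally uniformly null. -/
lemma locunif_of_coef {a : ℝ} (ha : -1 < a) {F : ℕ → ℂ → ℂ} {c : ℕ → ℕ → ℂ}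
    (h : ∀ n, HasSer (F n) (c n)) {M : ℝ} (hM : ∀ n j, ‖c n j‖ ≤ cc a j * M)
    (hc : ∀ j, Tendsto (fun n => c n j) atTop (𝓝 0)) :
    TendstoLocallyUniformlyOn F (fun _ => 0) atTop (ball (0 : ℂ) 1) := by
  rw [tendstoLocallyUniformlyOn_iff_forall_isCompact isOpen_ball]
  intro K hK hKc
  obtain ⟨r, hr, hKr⟩ := exists_pos_lt_subset_ball one_pos hKc.isClosed hK
  have hr0 := hr.1.le
  have hs := (hasSum_kernel_real ha hr0 hr.2).summable.mul_right M
  have hT := tendsto_tsum_of_dominated_convergence (𝓕 := atTop)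
    (f := fun n j => ‖c n j‖ * r ^ j) (g := fun _ => 0) hs
    (fun j => by simpa using (hc j).norm.mul_const (r ^ j))
    (Eventually.of_forall fun n j => by
      rw [Real.norm_of_nonneg (by positivity)]
      calc _ ≤ cc a j * M * r ^ j := by gcongr; exact hM n j
        _ = _ := by ring)
  rw [tsum_zero] at hT
  rw [Metric.tendstoUniformlyOn_iff]
  intro ε hε
  filter_upwards [hT.eventually_lt_const hε] with n hn z hz
  rw [dist_zero_left]
  refine lt_of_le_of_lt ?_ hn
  have hzr : ‖z‖ < r := by simpa using hKr hz
  rw [← (h n z (hK hz)).tsum_eq]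
  refine tsum_of_norm_bounded (Summable.hasSum ?_) fun j => ?_
  · refine Summable.of_nonneg_of_le (fun j => by positivity) (fun j => ?_) hs
    calc _ ≤ cc a j * M * r ^ j := by gcongr; exact hM n j
      _ = _ := by ring
  · rw [norm_mul, norm_pow]; gcongr

/-- The vanishing property `hS` yields norm-convergent subsequences for bounded sequences of
`μ`-integrable functions. -/
lemma subseq_of_vanishing {a b : ℝ} (ha : -1 < a) (hb : -1 < b) {μ : Measure ℂ} {C : ℝ≥0}
    (hbdd : ∀ f : ℂ → ℂ, DifferentiableOn ℂ f (ball 0 1) →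
      mass b (Toep μ b f) 0 ≤ C * mass a f 0)
    (hS : ∀ f : ℕ → ℂ → ℂ, (∀ n, DifferentiableOn ℂ (f n) (ball 0 1)) →
      (∃ M : ℝ≥0, ∀ n, mass a (f n) 0 ≤ M) →
      TendstoLocallyUniformlyOn f (fun _ => 0) atTop (ball 0 1) →
      Tendsto (fun n => mass b (Toep μ b (f n)) 0) atTop (𝓝 0))
    {f : ℕ → ℂ → ℂ} (hf : ∀ n, DifferentiableOn ℂ (f n) (ball 0 1))
    (hint : ∀ n, IntegrableOn (f n) (ball 0 1) μ)
    {M : ℝ≥0} (hM : ∀ n, mass a (f n) 0 ≤ M) :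
    ∃ φ : ℕ → ℕ, StrictMono φ ∧ ∃ g : ℂ → ℂ, DifferentiableOn ℂ g (ball 0 1) ∧
      mass b g 0 ≠ ⊤ ∧
      Tendsto (fun k => mass b (fun z => Toep μ b (f (φ k)) z - g z) 0) atTop (𝓝 0) := by
  choose c hc using fun n => exists_hasSer (hf n)
  have hcM : ∀ n j, ‖c n j‖ ≤ cc a j * M := fun n j =>
    coef_le ha (hc n) ((mass_mono ha (Nat.zero_le j) fun _ _ => le_rfl).trans (hM n))
  -- Montel's theorem in the form of Tychonoff's theorem for Taylor coefficients.
  obtain ⟨x, -, φ, hφ, hx⟩ := (isCompact_univ_pi fun j =>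
    isCompact_closedBall (0 : ℂ) (cc a j * M)).tendsto_subseq (x := c)
    (fun n j _ => by simpa using hcM n j)
  rw [tendsto_pi_nhds] at hx
  refine ⟨φ, hφ, complete hb (fun n => (toep_hasSer hb (hint (φ n))).differentiableOn) (fun n => ?_) ?_⟩
  · refine ((hbdd _ (hf (φ n))).trans (mul_le_mul_right (hM (φ n)) _)).trans_lt ?_ |>.ne
    exact ENNReal.mul_lt_top ENNReal.coe_lt_top ENNReal.coe_lt_top
  · by_contra! hcon
    obtain ⟨ε, hε, hcon⟩ := hcon
    choose m hm n hn hlt using hcon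
    have hm' : Tendsto m atTop atTop := tendsto_atTop_mono hm tendsto_id
    have hn' : Tendsto n atTop atTop := tendsto_atTop_mono hn tendsto_id
    have h0 := hS (fun N w => f (φ (m N)) w - f (φ (n N)) w)
      (fun N => (hf _).sub (hf _)) ⟨M + M, fun N => ?_⟩ ?_
    · have hε' : (0 : ℝ≥0∞) < ε := by exact_mod_cast hε
      obtain ⟨N, hN⟩ := (h0.eventually_lt_const hε').exists
      refine (hN.trans (hlt N)).ne (mass_congr 0 fun z hz => ?_)
      exact toep_sub hb (hint _) (hint _) hz
    · rw [ENNReal.coe_add]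
      exact (mass_triangle ha 0 (hf (φ (m N))).continuousOn fun z _ => norm_sub_le _ _).trans
        (add_le_add (hM _) (hM _))
    · refine locunif_of_coef ha (c := fun N j => c (φ (m N)) j - c (φ (n N)) j)
        (fun N => (hc _).sub (hc _)) (M := M + M) (fun N j => ?_) fun j => ?_
      · refine (norm_sub_le _ _).trans ?_
        rw [mul_add]
        exact add_le_add (hcM _ _) (hcM _ _)
      · simpa using ((hx j).comp hm').sub ((hx j).comp hn')

/-! ### Compactness implies vanishing on null sequences -/

/-- If `y k i → 0` as `i → ∞` uniformly in `k`, and the consecutive differences in `i` tend to `0`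
as `k → ∞`, then so does `y k i` itself: telescope up to a uniformly small term. -/
lemma tendsto_of_difference {y : ℕ → ℕ → ℂ} (h1 : ∀ ε > 0, ∃ I, ∀ i ≥ I, ∀ k, ‖y k i‖ ≤ ε)
    (h2 : ∀ i, Tendsto (fun k => y k i - y k (i + 1)) atTop (𝓝 0)) (i : ℕ) :
    Tendsto (fun k => y k i) atTop (𝓝 0) := by
  have h3 : ∀ m, Tendsto (fun k => y k i - y k (i + m)) atTop (𝓝 0) := fun m => by
    induction m with
    | zero => simp
    | succ m ih => simpa [← add_assoc] using ih.add (h2 (i + m))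
  rw [Metric.tendsto_nhds]
  intro ε hε
  obtain ⟨I, hI⟩ := h1 (ε / 2) (half_pos hε)
  filter_upwards [(Metric.tendsto_nhds.1 (h3 I)) (ε / 2) (half_pos hε)] with k hk
  have := hI (i + I) (by omega) k
  rw [dist_zero_right] at hk ⊢
  have h4 := norm_add_le (y k i - y k (i + I)) (y k (i + I))
  rw [sub_add_cancel] at h4
  linarith

/-- The modified moment `∫ f w̄^j |w|^{2i} (1-|w|²)^p dμ` over the unit disk, with `|w|²` written as
`w w̄`. -/
noncomputable def dmom (μ : Measure ℂ) (f : ℂ → ℂ) (j p i : ℕ) : ℂ :=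
  ∫ w in ball (0 : ℂ) 1, f w * ((starRingEnd ℂ) w ^ j * (w * (starRingEnd ℂ) w) ^ i *
    (1 - w * (starRingEnd ℂ) w) ^ p) ∂μ

lemma norm_one_sub_le {w : ℂ} (hw : w ∈ ball (0 : ℂ) 1) :
    ‖1 - w * (starRingEnd ℂ) w‖ ≤ 1 ∧ ‖1 - w * (starRingEnd ℂ) w‖ ≤ 2 * (1 - ‖w‖) := by
  have hw' : ‖w‖ < 1 := by simpa using hw
  have h0 := norm_nonneg w
  rw [Complex.mul_conj', ← Complex.ofReal_pow, ← Complex.ofReal_one, ← Complex.ofReal_sub,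
    Complex.norm_real, Real.norm_of_nonneg (by nlinarith)]
  constructor <;> nlinarith

lemma dmom_integrable {μ : Measure ℂ} {f : ℂ → ℂ} (hf : IntegrableOn f (ball 0 1) μ)
    (j p i : ℕ) : IntegrableOn (fun w => f w * ((starRingEnd ℂ) w ^ j *
      (w * (starRingEnd ℂ) w) ^ i * (1 - w * (starRingEnd ℂ) w) ^ p)) (ball 0 1) μ := by
  have hc := Complex.continuous_conj
  refine mom_integrable hf (C := 1) (by fun_prop) fun w hw => ?_
  rw [norm_mul, norm_mul, norm_pow _ i, norm_pow _ p]
  exact mul_le_one₀ (mul_le_one₀ (norm_conj_pow_le j w hw) (by positivity)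
    (pow_le_one₀ (norm_nonneg _) (norm_mul_conj hw hw).le)) (by positivity)
    (pow_le_one₀ (norm_nonneg _) (norm_one_sub_le hw).1)

lemma dmom_sub {μ : Measure ℂ} {f : ℂ → ℂ} (hf : IntegrableOn f (ball 0 1) μ) (j p i : ℕ) :
    dmom μ f j p i - dmom μ f j p (i + 1) = dmom μ f j (p + 1) i := by
  unfold dmom
  rw [← integral_sub (dmom_integrable hf j p i) (dmom_integrable hf j p (i + 1))]
  congr 1; ext w; ring

lemma dmom_zero_eq (μ : Measure ℂ) (f : ℂ → ℂ) (j i : ℕ) :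
    dmom μ f j 0 i = mom μ (fun w => w ^ i * f w) (i + j) := by
  unfold dmom mom
  congr 1; ext w; ring

/-- By compactness (`hK`), the modified moments of a bounded sequence tend to `0` as `i → ∞`
uniformly along the sequence. -/
lemma dmom_uniform {a b : ℝ} (ha : -1 < a) (hb : -1 < b) {μ : Measure ℂ}
    (hK : ∀ f : ℕ → ℂ → ℂ, (∀ n, DifferentiableOn ℂ (f n) (ball 0 1)) →
      (∃ M : ℝ≥0, ∀ n, mass a (f n) 0 ≤ M) →
      ∃ φ : ℕ → ℕ, StrictMono φ ∧ ∃ g : ℂ → ℂ, DifferentiableOn ℂ g (ball 0 1) ∧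
        mass b g 0 ≠ ⊤ ∧
        Tendsto (fun k => mass b (fun z => Toep μ b (f (φ k)) z - g z) 0) atTop (𝓝 0))
    {u : ℕ → ℂ → ℂ} (hu : ∀ n, DifferentiableOn ℂ (u n) (ball 0 1))
    (hint : ∀ n, IntegrableOn (u n) (ball 0 1) μ)
    {M : ℝ≥0} (hM : ∀ n, mass a (u n) 0 ≤ M) (j p : ℕ) :
    ∀ ε > 0, ∃ I, ∀ i ≥ I, ∀ k, ‖dmom μ (u k) j p i‖ ≤ ε := by
  induction p with
  | zero =>
    by_contra! hcon
    obtain ⟨ε, hε, hcon⟩ := hcon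
    choose i hi k hlt using hcon
    have hle1 : ∀ (n : ℕ), ∀ w ∈ ball (0 : ℂ) 1, ‖w ^ n‖ ≤ 1 := fun n w hw => by
      rw [norm_pow]
      exact pow_le_one₀ (norm_nonneg _) (by simpa using hw : ‖w‖ < 1).le
    -- If uniformity fails at indices `i I ≥ I` and `k I`, apply compactness to `w^{i I} u_{k I}`.
    obtain ⟨φ, hφ, G, hG, hGfin, hT⟩ := hK (fun I w => w ^ i I * u (k I) w)
      (fun I => (by fun_prop : DifferentiableOn ℂ (fun w : ℂ => w ^ i I) _).mul (hu _))
      ⟨M, fun I => (mass_mono ha le_rfl fun w hw => by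
        rw [norm_mul]
        exact mul_le_of_le_one_left (norm_nonneg _) (hle1 _ w hw)).trans (hM (k I))⟩
    have hexp : Tendsto (fun l => i (φ l) + j) atTop atTop :=
      tendsto_atTop_mono (fun l => (hφ.le_apply.trans (hi (φ l))).trans (Nat.le_add_right _ j))
        tendsto_id
    have hlim := ((mass_tendsto hb hG.continuousOn hGfin).comp hexp).add hT
    rw [add_zero] at hlim
    obtain ⟨l, hl⟩ := (hlim.eventually_lt_const (ENNReal.ofReal_pos.2 hε)).exists
    refine hl.not_ge ?_
    have hi' : IntegrableOn (fun w => w ^ i (φ l) * u (k (φ l)) w) (ball 0 1) μ :=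
      (mom_integrable (hint (k (φ l))) (p := fun w => w ^ i (φ l)) (by fun_prop)
        (hle1 _)).congr_fun (fun w _ => mul_comm _ _) measurableSet_ball
    calc ENNReal.ofReal ε ≤ ENNReal.ofReal ‖dmom μ (u (k (φ l))) j 0 (i (φ l))‖ :=
          ENNReal.ofReal_le_ofReal (hlt _).le
      _ ≤ mass b (Toep μ b fun w => w ^ i (φ l) * u (k (φ l)) w) (i (φ l) + j) := by
          rw [dmom_zero_eq]; exact mom_le hb hi' _
      _ ≤ mass b G (i (φ l) + j) + mass b (fun z =>
            Toep μ b (fun w => w ^ i (φ l) * u (k (φ l)) w) z - G z) (i (φ l) + j) :=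
          mass_triangle hb _ hG.continuousOn fun z _ => by
            refine le_trans (le_of_eq ?_) (norm_add_le _ _)
            rw [add_sub_cancel]
      _ ≤ _ := add_le_add le_rfl (mass_mono hb (Nat.zero_le _) fun _ _ => le_rfl)
  | succ p ih =>
    intro ε hε
    obtain ⟨I, hI⟩ := ih (ε / 2) (half_pos hε)
    refine ⟨I, fun i hi k => ?_⟩
    rw [← dmom_sub (hint k)]
    have := norm_sub_le (dmom μ (u k) j p i) (dmom μ (u k) j p (i + 1))
    linarith [hI i hi k, hI (i + 1) (by omega) k]

/-- For `N ≥ 2 + a` the factor `(1-|w|²)^N` absorbs the growth of `u k`, and dominated convergence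
with a constant majorant applies. -/
lemma dmom_tendsto {a : ℝ} (ha : -1 < a) {μ : Measure ℂ} [IsFiniteMeasure μ]
    {u : ℕ → ℂ → ℂ} (hu : ∀ n, DifferentiableOn ℂ (u n) (ball 0 1))
    (hint : ∀ n, IntegrableOn (u n) (ball 0 1) μ)
    {M : ℝ≥0} (hM : ∀ n, mass a (u n) 0 ≤ M)
    (h0 : ∀ z ∈ ball (0 : ℂ) 1, Tendsto (fun n => u n z) atTop (𝓝 0))
    (j i : ℕ) {N : ℕ} (hN : 2 + a ≤ N) :
    Tendsto (fun k => dmom μ (u k) j N i) atTop (𝓝 0) := by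
  have := tendsto_integral_of_dominated_convergence (μ := μ.restrict (ball (0 : ℂ) 1))
    (F := fun k w => u k w * ((starRingEnd ℂ) w ^ j * (w * (starRingEnd ℂ) w) ^ i *
      (1 - w * (starRingEnd ℂ) w) ^ N)) (f := fun _ => 0) (fun _ => 2 ^ N * (M : ℝ))
    (fun k => (dmom_integrable (hint k) j N i).aestronglyMeasurable) (integrable_const _)
    (fun k => ?_) ?_
  · simpa [dmom] using this
  · filter_upwards [ae_restrict_mem measurableSet_ball] with w hw
    have hw' : ‖w‖ < 1 := by simpa using hw
    have hw1 : 0 < 1 - ‖w‖ := by linarith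
    obtain ⟨c, hc⟩ := exists_hasSer (hu k)
    have hg := growth ha hc (hM k) hw
    have e1 : ‖(starRingEnd ℂ) w ^ j * (w * (starRingEnd ℂ) w) ^ i‖ ≤ 1 := by
      rw [norm_mul, norm_pow _ i]
      exact mul_le_one₀ (norm_conj_pow_le j w hw) (by positivity)
        (pow_le_one₀ (norm_nonneg _) (norm_mul_conj hw hw).le)
    have e2 : (1 - ‖w‖) ^ N ≤ (1 - ‖w‖) ^ (2 + a) := by
      rw [← Real.rpow_natCast]
      exact Real.rpow_le_rpow_of_exponent_ge hw1 (by linarith [norm_nonneg w]) hN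
    have e3 : 0 < (1 - ‖w‖) ^ (2 + a) := Real.rpow_pos_of_pos hw1 _
    rw [norm_mul, norm_mul, norm_pow _ N]
    calc _ ≤ (1 / (1 - ‖w‖) ^ (2 + a) * M) * (1 * (2 * (1 - ‖w‖)) ^ N) := by
          gcongr
          exact (norm_one_sub_le hw).2
      _ = 2 ^ N * M * ((1 - ‖w‖) ^ N / (1 - ‖w‖) ^ (2 + a)) := by rw [mul_pow]; ring
      _ ≤ 2 ^ N * M * 1 := by gcongr; exact (div_le_one e3).2 e2
      _ = _ := mul_one _
  · filter_upwards [ae_restrict_mem measurableSet_ball] with w hw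
    simpa using (h0 w hw).mul_const _

/-- Compactness (`hK`) makes the images of a bounded, pointwise null sequence of `μ`-integrable
functions tend to `0` in norm along a subsequence. -/
lemma vanishing_of_subseq {a b : ℝ} (ha : -1 < a) (hb : -1 < b) {μ : Measure ℂ}
    [IsFiniteMeasure μ]
    (hK : ∀ f : ℕ → ℂ → ℂ, (∀ n, DifferentiableOn ℂ (f n) (ball 0 1)) →
      (∃ M : ℝ≥0, ∀ n, mass a (f n) 0 ≤ M) →
      ∃ φ : ℕ → ℕ, StrictMono φ ∧ ∃ g : ℂ → ℂ, DifferentiableOn ℂ g (ball 0 1) ∧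
        mass b g 0 ≠ ⊤ ∧
        Tendsto (fun k => mass b (fun z => Toep μ b (f (φ k)) z - g z) 0) atTop (𝓝 0))
    {u : ℕ → ℂ → ℂ} (hu : ∀ n, DifferentiableOn ℂ (u n) (ball 0 1))
    (hint : ∀ n, IntegrableOn (u n) (ball 0 1) μ)
    {M : ℝ≥0} (hM : ∀ n, mass a (u n) 0 ≤ M)
    (h0 : ∀ z ∈ ball (0 : ℂ) 1, Tendsto (fun n => u n z) atTop (𝓝 0)) :
    ∃ φ : ℕ → ℕ, Tendsto (fun k => mass b (Toep μ b (u (φ k))) 0) atTop (𝓝 0) := by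
  have hmom : ∀ j, Tendsto (fun k => mom μ (u k) j) atTop (𝓝 0) := fun j => by
    obtain ⟨N, hN⟩ := exists_nat_ge (2 + a)
    -- Downward induction on the exponent `p`.
    have key : ∀ p ≤ N, ∀ i, Tendsto (fun k => dmom μ (u k) j p i) atTop (𝓝 0) := fun p hp => by
      induction hp using Nat.decreasingInduction with
      | self => exact fun i => dmom_tendsto ha hu hint hM h0 j i hN
      | of_succ p hp ih =>
        refine tendsto_of_difference (dmom_uniform ha hb hK hu hint hM j p) fun i => ?_
        simpa only [dmom_sub (hint _)] using ih i
    simpa [dmom_zero_eq] using key 0 (Nat.zero_le _) 0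
  obtain ⟨φ, hφ, g, hg, hgfin, hT⟩ := hK u hu ⟨M, hM⟩
  refine ⟨φ, ?_⟩
  obtain ⟨c, hc⟩ := exists_hasSer hg
  -- The coefficients of `T u_{φ k} - g` tend to `0`, as do those of `T u_{φ k}`.
  have hc0 : ∀ j, c j = 0 := fun j => by
    have hlim : Tendsto (fun k => ENNReal.ofReal ‖cc b j * mom μ (u (φ k)) j - c j‖) atTop (𝓝 0) := by
      have h1 := ENNReal.Tendsto.const_mul (a := ENNReal.ofReal (cc b j)) hT (Or.inr (by simp))
      rw [mul_zero] at h1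
      refine tendsto_of_tendsto_of_tendsto_of_le_of_le tendsto_const_nhds h1
        (fun _ => bot_le) fun k => ?_
      exact (coef_bound hb ((toep_hasSer hb (hint (φ k))).sub hc) j).trans
        (mul_le_mul_right (mass_mono hb (Nat.zero_le j) fun _ _ => le_rfl) _)
    have h2 := (((((hmom j).comp hφ.tendsto_atTop).const_mul (cc b j : ℂ)).sub_const (c j)).norm)
    have h3 := tendsto_nhds_unique (ENNReal.tendsto_ofReal h2) hlim
    simpa using h3
  have hg0 : ∀ z ∈ ball (0 : ℂ) 1, g z = 0 := fun z hz => by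
    have := hc z hz
    simp only [hc0, zero_mul] at this
    exact this.unique hasSum_zero
  refine hT.congr fun k => mass_congr 0 fun z hz => ?_
  simp [hg0 z hz]

theorem stmt14 (a b : ℝ) (ha : -1 < a) (hb : -1 < b)
    (μ : Measure ℂ) [IsFiniteMeasure μ]
    (hbdd : ∃ C : ℝ≥0, ∀ f : ℂ → ℂ, DifferentiableOn ℂ f (ball (0 : ℂ) 1) →
      wnorm 1 b (Toep μ b f) ≤ C * wnorm 1 a f) :
    (∀ f : ℕ → ℂ → ℂ,
        (∀ n, DifferentiableOn ℂ (f n) (ball (0 : ℂ) 1)) →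
        (∃ M : ℝ≥0, ∀ n, wnorm 1 a (f n) ≤ M) →
        ∃ φ : ℕ → ℕ, StrictMono φ ∧ ∃ g : ℂ → ℂ,
          DifferentiableOn ℂ g (ball (0 : ℂ) 1) ∧ wnorm 1 b g ≠ ⊤ ∧
          Tendsto (fun k => wnorm 1 b fun z => Toep μ b (f (φ k)) z - g z) atTop (𝓝 0)) ↔
      (∀ f : ℕ → ℂ → ℂ,
        (∀ n, DifferentiableOn ℂ (f n) (ball (0 : ℂ) 1)) →
        (∃ M : ℝ≥0, ∀ n, wnorm 1 a (f n) ≤ M) →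
        TendstoLocallyUniformlyOn f (fun _ => 0) atTop (ball (0 : ℂ) 1) →
        Tendsto (fun n => wnorm 1 b (Toep μ b (f n))) atTop (𝓝 0)) := by
  simp only [wnorm_eq] at hbdd ⊢
  obtain ⟨C, hC⟩ := hbdd
  constructor
  · rintro hK f hf ⟨M, hM⟩ hf0
    refine tendsto_of_subseq_tendsto fun ns hns => ?_
    by_cases hfr : ∃ᶠ n in atTop, ¬ IntegrableOn (f (ns n)) (ball 0 1) μ
    -- Where `f` is not `μ`-integrable, its image vanishes on the disk.
    · obtain ⟨φ, -, hφ⟩ := extraction_of_frequently_atTop hfr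
      refine ⟨φ, ?_⟩
      simp only [mass_zero 0 fun z hz => toep_eq_zero hb (hφ _) hz]
      exact tendsto_const_nhds
    · rw [not_frequently] at hfr
      obtain ⟨N, hN⟩ := eventually_atTop.1 hfr
      obtain ⟨φ, hφ⟩ := vanishing_of_subseq ha hb hK (u := fun k => f (ns (k + N)))
        (fun k => hf _) (fun k => not_not.1 (hN _ (Nat.le_add_left _ _))) (fun k => hM _)
        (fun z hz => (hf0.tendsto_at hz).comp (hns.comp (tendsto_add_atTop_nat N)))
      exact ⟨fun k => φ k + N, hφ⟩
  · rintro hS f hf ⟨M, hM⟩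
    by_cases hfr : ∃ᶠ n in atTop, ¬ IntegrableOn (f n) (ball 0 1) μ
    -- Where `f` is not `μ`-integrable, its image vanishes on the disk.
    · obtain ⟨φ, hφ, hφi⟩ := extraction_of_frequently_atTop hfr
      refine ⟨φ, hφ, fun _ => 0, differentiableOn_const _, by simp [mass], ?_⟩
      simp only [sub_zero, mass_zero 0 fun z hz => toep_eq_zero hb (hφi _) hz]
      exact tendsto_const_nhds
    · rw [not_frequently] at hfr
      obtain ⟨N, hN⟩ := eventually_atTop.1 hfr
      obtain ⟨φ, hφ, h⟩ := subseq_of_vanishing ha hb hC hS (f := fun k => f (k + N))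
        (fun k => hf _) (fun k => not_not.1 (hN _ (Nat.le_add_left _ _))) (fun k => hM _)
      exact ⟨fun k => φ k + N, hφ.add_const N, h⟩
end
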